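/- arXiv:2102.03838 — 4 statements merged into one kernel-verified Lean document; each statement's English description precedes it below -/
import Mathlib

section
/- If X is a Grothendieck Banach space and Y is a Banach space whose dual unit ball is weak*-sequentially compact, then every bounded linear operator T : X → Y is weakly compact. -/
open Filter Topology ZeroAtInfty

/-- A sequence in the dual of `X` converges in the weak* topology. -/
def WeakStarConv (X : Type*) [SeminormedAddCommGroup X] [NormedSpace ℝ X]
    (f : ℕ → X →L[ℝ] ℝ) (g : X →L[ℝ] ℝ) : Prop :=
  ∀ x : X, Tendsto (fun n => f n x) atTop (𝓝 (g x))

/-- A sequence in a normed space `Z` converges in the weak topology. -/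
def WeakConv (Z : Type*) [SeminormedAddCommGroup Z] [NormedSpace ℝ Z]
    (f : ℕ → Z) (g : Z) : Prop :=
  ∀ φ : Z →L[ℝ] ℝ, Tendsto (fun n => φ (f n)) atTop (𝓝 (φ g))

/-- A Banach space is Grothendieck if weak*-convergent sequences in its dual converge weakly. -/
def IsGrothendieck (X : Type*) [SeminormedAddCommGroup X] [NormedSpace ℝ X] : Prop :=
  ∀ (f : ℕ → X →L[ℝ] ℝ) (g : X →L[ℝ] ℝ),
    WeakStarConv X f g → WeakConv (X →L[ℝ] ℝ) f g

/-- The weak topology of a normed space. -/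
def weakTopology (Y : Type*) [SeminormedAddCommGroup Y] [NormedSpace ℝ Y] :
    TopologicalSpace Y :=
  TopologicalSpace.induced (fun (y : Y) => fun f : Y →L[ℝ] ℝ => f y) Pi.topologicalSpace

/-- An operator is weakly compact if the image of the closed unit ball is
relatively compact in the weak topology. -/
def IsWeaklyCompactOp {X Y : Type*} [SeminormedAddCommGroup X] [NormedSpace ℝ X]
    [SeminormedAddCommGroup Y] [NormedSpace ℝ Y] (T : X →L[ℝ] Y) : Prop :=
  @IsCompact Y (weakTopology Y) (@closure Y (weakTopology Y) (⇑T '' Metric.closedBall 0 1))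

/-- A functional on the dual which is at most `c` on the part of the dual unit ball annihilating
a finite set of vectors lies within distance `c` of the canonical image of the space. -/
theorem exists_norm_sub_inclusionInDoubleDual_le {Y : Type*} [NormedAddCommGroup Y]
    [NormedSpace ℝ Y] (Λ : StrongDual ℝ (StrongDual ℝ Y)) {c : ℝ} (hc : 0 ≤ c) {s : Set Y}
    (hs : s.Finite) (h : ∀ f : StrongDual ℝ Y, ‖f‖ ≤ 1 → (∀ y ∈ s, f y = 0) → Λ f ≤ c) :
    ∃ y, ‖Λ - NormedSpace.inclusionInDoubleDual ℝ Y y‖ ≤ c := by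
  have := hs.to_subtype
  let L : s → StrongDual ℝ Y →ₗ[ℝ] ℝ :=
    fun y => (NormedSpace.inclusionInDoubleDual ℝ Y y).toLinearMap
  let p : Submodule ℝ (StrongDual ℝ Y) := ⨅ y, LinearMap.ker (L y)
  have mem_p (f : StrongDual ℝ Y) : f ∈ p ↔ ∀ y ∈ s, f y = 0 := by
    simp [p, L]
  have unit_le (f : StrongDual ℝ Y) (hf : f ∈ p) (hf1 : ‖f‖ ≤ 1) : ‖Λ f‖ ≤ c := by
    rw [Real.norm_eq_abs, abs_le]
    have hneg := h (-f) (by rwa [norm_neg]) ((mem_p _).1 (p.neg_mem hf))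
    rw [map_neg] at hneg
    exact ⟨by linarith, h f hf1 ((mem_p f).1 hf)⟩
  obtain ⟨Γ, hΓ, hΓnorm⟩ := exists_extension_norm_eq p (Λ.comp p.subtypeL)
  have hΓc : ‖Γ‖ ≤ c := by
    rw [hΓnorm]
    refine ContinuousLinearMap.opNorm_le_of_unit_norm hc fun f hf => ?_
    exact unit_le f f.2 hf.le
  have hmem : (Λ - Γ).toLinearMap ∈ Submodule.span ℝ (Set.range L) := by
    refine mem_span_of_iInf_ker_le_ker fun f hf => ?_
    have := hΓ ⟨f, hf⟩
    simp only [ContinuousLinearMap.comp_apply, Submodule.subtypeL_apply] at this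
    simp [this]
  let _ := Fintype.ofFinite s
  obtain ⟨a, ha⟩ := (Submodule.mem_span_range_iff_exists_fun ℝ).1 hmem
  refine ⟨∑ y : s, a y • (y : Y), ?_⟩
  have hΓeq : Λ - NormedSpace.inclusionInDoubleDual ℝ Y (∑ y : s, a y • (y : Y)) = Γ := by
    ext f
    have := LinearMap.congr_fun ha f
    simp only [LinearMap.sum_apply, LinearMap.smul_apply, L, ContinuousLinearMap.coe_coe,
      NormedSpace.dual_def, sub_apply, smul_eq_mul] at this
    simp [this]
  rwa [hΓeq]

/-- A sequence in the closed unit ball converges weak* in the bidual along a nonprincipal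
ultrafilter. -/
theorem exists_tendsto_hyperfilter_of_norm_le_one {X : Type*} [NormedAddCommGroup X]
    [NormedSpace ℝ X] (x : ℕ → X) (hx : ∀ n, ‖x n‖ ≤ 1) :
    ∃ ξ : StrongDual ℝ (StrongDual ℝ X), ∀ h : StrongDual ℝ X,
      Tendsto (fun n => h (x n)) (hyperfilter ℕ) (𝓝 (ξ h)) := by
  let u : ℕ → WeakDual ℝ (StrongDual ℝ X) :=
    fun n => StrongDual.toWeakDual (NormedSpace.inclusionInDoubleDual ℝ X (x n))
  obtain ⟨ξ, -, hξ⟩ := (WeakDual.isCompact_closedBall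
    (0 : StrongDual ℝ (StrongDual ℝ X)) 1).ultrafilter_le_nhds ((hyperfilter ℕ).map u) (by
      rw [le_principal_iff, Ultrafilter.coe_map, mem_map]
      refine Eventually.of_forall fun n => ?_
      refine mem_closedBall_zero_iff.2 ?_
      exact (NormedSpace.double_dual_bound ℝ X (x n)).trans (hx n))
  exact ⟨WeakDual.toStrongDual ξ, fun h =>
    ((WeakDual.eval_continuous h).tendsto ξ).comp (show Tendsto u (hyperfilter ℕ) (𝓝 ξ) from hξ)⟩

/-- If some `Λ` in the weak* closure of the image of the unit ball under `T` does not come from `Y`,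
then there is a triangular system of vectors and functionals for `T`. -/
theorem exists_triangular_system {X Y : Type*} [NormedAddCommGroup X] [NormedSpace ℝ X]
    [NormedAddCommGroup Y] [NormedSpace ℝ Y] [CompleteSpace Y] (T : X →L[ℝ] Y)
    (Λ : StrongDual ℝ (StrongDual ℝ Y))
    (hΛ : ∀ (s : Finset (StrongDual ℝ Y)) (δ : ℝ), (∀ f ∈ s, δ < Λ f) →
      ∃ x : X, ‖x‖ ≤ 1 ∧ ∀ f ∈ s, δ < f (T x))
    (hrange : Λ ∉ Set.range (NormedSpace.inclusionInDoubleDual ℝ Y)) :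
    ∃ (δ : ℝ) (f : ℕ → StrongDual ℝ Y) (x : ℕ → X), 0 < δ ∧ (∀ n, ‖f n‖ ≤ 1) ∧
      (∀ n, ‖x n‖ ≤ 1) ∧ ∀ m n, m < n → f n (T (x m)) = 0 ∧ δ < f m (T (x n)) := by
  classical
  have hclosed : IsClosed (Set.range (NormedSpace.inclusionInDoubleDual ℝ Y)) :=
    (NormedSpace.inclusionInDoubleDualLi (E := Y) ℝ).isometry.isUniformInducing.isComplete_range
      |>.isClosed
  obtain ⟨ε, hε, hball⟩ := Metric.isOpen_iff.1 hclosed.isOpen_compl Λ hrange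
  have far (y : Y) : ε / 2 < ‖Λ - NormedSpace.inclusionInDoubleDual ℝ Y y‖ := by
    by_contra! hle
    refine hball (a := NormedSpace.inclusionInDoubleDual ℝ Y y) ?_ ⟨y, rfl⟩
    exact (mem_ball_iff_norm' (E := StrongDual ℝ (StrongDual ℝ Y))).2 (hle.trans_lt (half_lt_self hε))
  obtain ⟨u, hu, hu'⟩ := exists_seq_of_forall_finset_exists
    (fun q : StrongDual ℝ Y × X => ‖q.1‖ ≤ 1 ∧ ‖q.2‖ ≤ 1 ∧ ε / 2 < Λ q.1)
    (fun q r => r.1 (T q.2) = 0 ∧ ε / 2 < q.1 (T r.2)) (by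
      intro s hs
      obtain ⟨f, hf, hf0, hfΛ⟩ : ∃ f : StrongDual ℝ Y, ‖f‖ ≤ 1 ∧
          (∀ y ∈ (fun q : StrongDual ℝ Y × X => T q.2) '' s, f y = 0) ∧ ε / 2 < Λ f := by
        by_contra! hcon
        obtain ⟨y, hy⟩ := exists_norm_sub_inclusionInDoubleDual_le Λ (half_pos hε).le
          (s.finite_toSet.image _) hcon
        exact (far y).not_ge hy
      obtain ⟨x, hx, hxs⟩ := hΛ (s.image Prod.fst) (ε / 2) (by
        intro g hg
        obtain ⟨q, hq, rfl⟩ := Finset.mem_image.1 hg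
        exact (hs q hq).2.2)
      exact ⟨(f, x), ⟨hf, hx, hfΛ⟩, fun q hq =>
        ⟨hf0 _ ⟨q, hq, rfl⟩, hxs _ (Finset.mem_image_of_mem _ hq)⟩⟩)
  exact ⟨ε / 2, fun n => (u n).1, fun n => (u n).2, half_pos hε, fun n => (hu n).1,
    fun n => (hu n).2.1, hu'⟩

/-- The functionals of a triangular system for `T` have no weak*-convergent subsequence whose image
under the adjoint of `T` converges weakly. -/
theorem not_weakConv_comp_of_triangular_system {X Y : Type*}
    [NormedAddCommGroup X] [NormedSpace ℝ X] [NormedAddCommGroup Y] [NormedSpace ℝ Y]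
    (T : X →L[ℝ] Y) {δ : ℝ} (hδ : 0 < δ)
    {f : ℕ → Y →L[ℝ] ℝ} {x : ℕ → X} (hx : ∀ n, ‖x n‖ ≤ 1)
    (hfx : ∀ m n, m < n → f n (T (x m)) = 0 ∧ δ < f m (T (x n)))
    {g : Y →L[ℝ] ℝ} {φ : ℕ → ℕ} (hφ : StrictMono φ)
    (hg : WeakStarConv Y (fun k => f (φ k)) g) :
    ¬ WeakConv (X →L[ℝ] ℝ) (fun k => (f (φ k)).comp T) (g.comp T) := by
  intro hTg
  obtain ⟨ξ, hξ⟩ := exists_tendsto_hyperfilter_of_norm_le_one x hx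
  have hgx (n : ℕ) : g (T (x n)) = 0 := by
    refine tendsto_nhds_unique (hg (T (x n))) (tendsto_const_nhds.congr' ?_)
    filter_upwards [hφ.tendsto_atTop.eventually_gt_atTop n] with k hk
    exact (hfx n (φ k) hk).1.symm
  have hξg : ξ (g.comp T) = 0 :=
    tendsto_nhds_unique (hξ (g.comp T)) (by simp [hgx])
  have hξf (m : ℕ) : δ ≤ ξ ((f m).comp T) := by
    refine ge_of_tendsto (hξ ((f m).comp T)) ?_
    have hlt : ∀ᶠ n in (hyperfilter ℕ : Filter ℕ), m < n :=
      Nat.hyperfilter_le_atTop (eventually_gt_atTop m)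
    exact hlt.mono fun n hn => (hfx m n hn).2.le
  have := ge_of_tendsto' (hTg ξ) fun k => hξf (φ k)
  linarith

/-- Every operator from a Grothendieck space into a space with weak*-sequentially compact
dual ball is weakly compact. -/
theorem grothendieck_op_to_wstarSeqCompact_weaklyCompact (X Y : Type*)
    [NormedAddCommGroup X] [NormedSpace ℝ X] [CompleteSpace X]
    [NormedAddCommGroup Y] [NormedSpace ℝ Y] [CompleteSpace Y]
    (hX : IsGrothendieck X)
    (hY : ∀ f : ℕ → Y →L[ℝ] ℝ, (∀ n, ‖f n‖ ≤ 1) →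
      ∃ (g : Y →L[ℝ] ℝ) (φ : ℕ → ℕ), StrictMono φ ∧
        WeakStarConv Y (fun k => f (φ k)) g)
    (T : X →L[ℝ] Y) :
    IsWeaklyCompactOp T := by
  refine NormedSpace.isCompact_closure_of_isBounded ℝ Y
    (show Set (WeakSpace ℝ Y) from T '' Metric.closedBall 0 1) ?_ ?_
  · exact T.lipschitz.isBounded_image Metric.isBounded_closedBall
  intro Λ hΛ
  by_contra hrange
  obtain ⟨δ, f, x, hδ, hf, hx, hfx⟩ := exists_triangular_system T (WeakDual.toStrongDual Λ)
    (fun s δ hs => by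
      have hopen : IsOpen (⋂ f ∈ s, {Γ : WeakDual ℝ (StrongDual ℝ Y) | δ < Γ f}) :=
        isOpen_biInter_finset fun f _ =>
          isOpen_lt continuous_const (WeakDual.eval_continuous f)
      obtain ⟨_, hΓ, _, ⟨x, hx, rfl⟩, rfl⟩ :=
        mem_closure_iff.1 hΛ _ hopen (Set.mem_iInter₂.2 hs)
      exact ⟨x, mem_closedBall_zero_iff.1 hx, Set.mem_iInter₂.1 hΓ⟩)
    (fun ⟨y, hy⟩ => hrange ⟨toWeakSpace ℝ Y y, hy⟩)
  obtain ⟨g, φ, hφ, hg⟩ := hY f hf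
  exact not_weakConv_comp_of_triangular_system T hδ hx hfx hφ hg (hX _ _ fun z => hg (T z))
end

section
/- A Banach space X has no quotient isomorphic to c₀ if and only if every weak*-convergent sequence in X* has a weakly Cauchy subsequence. -/
open Filter Topology ZeroAtInfty

/-- A sequence in `Z` is weakly Cauchy if its image under every functional converges. -/
def WeaklyCauchy (Z : Type*) [SeminormedAddCommGroup Z] [NormedSpace ℝ Z]
    (f : ℕ → Z) : Prop :=
  ∀ φ : Z →L[ℝ] ℝ, ∃ l : ℝ, Tendsto (fun n => φ (f n)) atTop (𝓝 l)

/-- `X` has a quotient isomorphic to `c₀`. -/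
def HasQuotientC0 (X : Type*) [SeminormedAddCommGroup X] [NormedSpace ℝ X] : Prop :=
  ∃ M : Submodule ℝ X, IsClosed (M : Set X) ∧ Nonempty ((X ⧸ M) ≃L[ℝ] C₀(ℕ, ℝ))

section Independence

variable {S : Type*}

/-- Diagonalization: a hereditary property that can always be reached by thinning out an infinite
set of indices can be achieved for all tails of a single increasing sequence. -/
theorem exists_strictMono_forall_tail (P : ℕ → ℕ → Set ℕ → Prop)
    (hP : ∀ j n M M', M' ⊆ M → P j n M → P j n M') (M₀ : Set ℕ) (hM₀ : M₀.Infinite)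
    (h : ∀ j, ∀ M ⊆ M₀, M.Infinite →
      ∃ n ∈ M, ∃ M' ⊆ M, M' ⊆ Set.Ioi n ∧ M'.Infinite ∧ P j n M') :
    ∃ u : ℕ → ℕ, StrictMono u ∧ ∀ j, u j ∈ M₀ ∧ P j (u j) (u '' Set.Ioi j) := by
  choose! n hn M' hM' hgt hinf hPn using h
  let M : ℕ → Set ℕ := fun k => Nat.rec M₀ (fun j M => M' j M) k
  have hM : ∀ k, M k ⊆ M₀ ∧ (M k).Infinite := by
    intro k
    induction k with
    | zero => exact ⟨subset_rfl, hM₀⟩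
    | succ k ih => exact ⟨(hM' k _ ih.1 ih.2).trans ih.1, hinf k _ ih.1 ih.2⟩
  have hanti : Antitone M := antitone_nat_of_succ_le fun k => hM' k _ (hM k).1 (hM k).2
  have hmem : ∀ k, n k (M k) ∈ M k := fun k => hn k _ (hM k).1 (hM k).2
  have htail : ∀ j k, j < k → n k (M k) ∈ M' j (M j) := fun j k hjk =>
    hanti (Nat.succ_le_of_lt hjk) (hmem k)
  refine ⟨fun k => n k (M k), strictMono_nat_of_lt_succ fun k => ?_, fun j => ⟨?_, ?_⟩⟩
  · exact hgt k _ (hM k).1 (hM k).2 (htail k (k + 1) k.lt_succ_self)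
  · exact (hM j).1 (hmem j)
  · refine hP _ _ _ _ ?_ (hPn j _ (hM j).1 (hM j).2)
    rintro _ ⟨k, hk, rfl⟩
    exact htail j k hk

/-- The point `t` lies in infinitely many of the sets `C c n`, `n ∈ M`, for both colours `c`. -/
def Oscillates (C : Bool → ℕ → Set S) (t : S) (M : Set ℕ) : Prop :=
  ∀ c, {n ∈ M | t ∈ C c n}.Infinite

/-- Along every infinite subset of `M` some point of `E` oscillates. -/
def OscillatesIn (C : Bool → ℕ → Set S) (E : Set S) (M : Set ℕ) : Prop :=
  ∀ N ⊆ M, N.Infinite → ∃ t ∈ E, Oscillates C t N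

variable {C : Bool → ℕ → Set S}

theorem Oscillates.mono {t : S} {M N : Set ℕ} (h : Oscillates C t N) (hNM : N ⊆ M) :
    Oscillates C t M :=
  fun c => (h c).mono fun _ hn => ⟨hNM hn.1, hn.2⟩

theorem Oscillates.of_finite_diff {t : S} {M N : Set ℕ} (h : Oscillates C t N)
    (hNM : (N \ M).Finite) : Oscillates C t M := by
  refine fun c => ((h c).sdiff hNM).mono ?_
  rintro n ⟨⟨hn, ht⟩, hn'⟩
  exact ⟨by_contra fun hM => hn' ⟨hn, hM⟩, ht⟩

theorem finite_image_sdiff_image_Ioi (u : ℕ → ℕ) (s : Set ℕ) (j : ℕ) :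
    (u '' s \ u '' Set.Ioi j).Finite := by
  refine ((Set.finite_Iic j).image u).subset ?_
  rintro _ ⟨⟨k, -, rfl⟩, hk⟩
  exact ⟨k, Set.mem_Iic.2 (not_lt.1 fun h => hk ⟨k, h, rfl⟩), rfl⟩

theorem infinite_inter_Ioi {N : Set ℕ} (hN : N.Infinite) (n : ℕ) : (N ∩ Set.Ioi n).Infinite := by
  refine (hN.sdiff (Set.finite_Iic n)).mono ?_
  rintro k ⟨hk, hk'⟩
  exact ⟨hk, Set.mem_Ioi.2 (not_le.1 hk')⟩

/-- A finite family of sets in which every subsequence oscillates can be refined by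
both colours of a single index. -/
theorem exists_refine_oscillatesIn (𝓔 : Set (Set S)) (h𝓔 : 𝓔.Finite) (M : Set ℕ)
    (hM : M.Infinite) (h : ∀ E ∈ 𝓔, OscillatesIn C E M) :
    ∃ n ∈ M, ∃ M' ⊆ M, M' ⊆ Set.Ioi n ∧ M'.Infinite ∧
      ∀ E ∈ 𝓔, ∀ c, OscillatesIn C (E ∩ C c n) M' := by
  by_contra! hcon
  obtain ⟨u, hu, huP⟩ := exists_strictMono_forall_tail
    (fun _ n M' => ∃ E ∈ 𝓔, ∃ c, ∀ t ∈ E ∩ C c n, ¬ Oscillates C t M')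
    (fun _ n M M' hMM' ⟨E, hE, c, hc⟩ => ⟨E, hE, c, fun t ht h => hc t ht (h.mono hMM')⟩) M hM (by
      intro _ N hNM hN
      obtain ⟨n, hn⟩ := hN.nonempty
      have hinf := infinite_inter_Ioi hN n
      obtain ⟨E, hE, c, hEc⟩ := hcon n (hNM hn) _ (Set.inter_subset_left.trans hNM)
        Set.inter_subset_right hinf
      simp only [OscillatesIn, not_forall, not_exists, not_and] at hEc
      obtain ⟨M', hM', hM'inf, hosc⟩ := hEc
      exact ⟨n, hn, M', hM'.trans Set.inter_subset_left, hM'.trans Set.inter_subset_right,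
        hM'inf, E, hE, c, hosc⟩)
  choose huM E hE c hc using huP
  have := h𝓔.to_subtype
  obtain ⟨⟨E₀, c₀⟩, hfib⟩ :=
    Finite.exists_infinite_fiber (fun j => ((⟨E j, hE j⟩ : 𝓔), c j))
  rw [Set.infinite_coe_iff] at hfib
  obtain ⟨t, htE, hosc⟩ := h E₀ E₀.2 _ (by rintro _ ⟨j, -, rfl⟩; exact huM j)
    (hfib.image hu.injective.injOn)
  obtain ⟨_, ⟨j, hj, rfl⟩, htj⟩ := (hosc c₀).nonempty
  simp only [Set.mem_preimage, Set.mem_singleton_iff, Prod.mk.injEq] at hj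
  obtain ⟨hj1, hj2⟩ := hj
  refine hc j t ⟨?_, ?_⟩ (hosc.of_finite_diff (finite_image_sdiff_image_Ioi u _ j))
  · rw [← hj1] at htE; exact htE
  · rw [hj2]; exact htj

/-- If every subsequence oscillates in `E`, then some subsequence is independent on `E`. -/
theorem exists_independent_of_oscillatesIn {E : Set S} {M : Set ℕ} (hM : M.Infinite)
    (h : OscillatesIn C E M) :
    ∃ u : ℕ → ℕ, StrictMono u ∧
      ∀ (ε : ℕ → Bool) (k : ℕ), ∃ t ∈ E, ∀ j < k, t ∈ C (ε j) (u j) := by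
  let Good : Set (Set S) × Set ℕ → Prop := fun σ =>
    σ.1.Finite ∧ σ.2.Infinite ∧ ∀ F ∈ σ.1, OscillatesIn C F σ.2
  have step : ∀ σ : {σ // Good σ}, ∃ (τ : {σ // Good σ}) (n : ℕ), n ∈ σ.1.2 ∧
      τ.1.2 ⊆ σ.1.2 ∧ τ.1.2 ⊆ Set.Ioi n ∧ ∀ F ∈ σ.1.1, ∀ c, F ∩ C c n ∈ τ.1.1 := by
    rintro ⟨⟨𝓔, N⟩, h𝓔, hN, hosc⟩
    obtain ⟨n, hn, N', hN', hgt, hinf, hosc'⟩ := exists_refine_oscillatesIn 𝓔 h𝓔 N hN hosc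
    refine ⟨⟨(Set.image2 (fun F c => F ∩ C c n) 𝓔 Set.univ, N'),
      h𝓔.image2 _ Set.finite_univ, hinf, ?_⟩, n, hn, hN', hgt,
      fun F hF c => ⟨F, hF, c, trivial, rfl⟩⟩
    rintro _ ⟨F, hF, c, -, rfl⟩
    exact hosc' F hF c
  choose next n hn hsub hgt hmem using step
  let σ : ℕ → {σ // Good σ} := fun k => Nat.rec
    ⟨({E}, M), Set.finite_singleton E, hM, by rintro _ rfl; exact h⟩ (fun _ τ => next τ) k
  refine ⟨fun k => n (σ k), strictMono_nat_of_lt_succ fun k => hgt (σ k) (hn (next (σ k))),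
    fun ε k => ?_⟩
  suffices ∃ F ∈ (σ k).1.1, F ⊆ E ∧ ∀ t ∈ F, ∀ j < k, t ∈ C (ε j) (n (σ j)) by
    obtain ⟨F, hF, hFE, hFC⟩ := this
    obtain ⟨t, ht, -⟩ := (σ k).2.2.2 F hF _ subset_rfl (σ k).2.2.1
    exact ⟨t, hFE ht, hFC t ht⟩
  induction k with
  | zero => exact ⟨E, rfl, subset_rfl, by simp⟩
  | succ k ih =>
    obtain ⟨F, hF, hFE, hFC⟩ := ih
    refine ⟨F ∩ C (ε k) (n (σ k)), hmem (σ k) F hF (ε k), Set.inter_subset_left.trans hFE,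
      fun t ht j hj => ?_⟩
    rcases Nat.lt_succ_iff_lt_or_eq.1 hj with hj | rfl
    · exact hFC t ht.1 j hj
    · exact ht.2

/-- The sets `{F n < r}` (colour `false`) and `{s < F n}` (colour `true`). -/
def levelSets (F : ℕ → S → ℝ) (r s : ℝ) : Bool → ℕ → Set S :=
  fun c n => {t | bif c then s < F n t else F n t < r}

/-- A sequence of functions, bounded at each point of `E`, either has a subsequence
converging at each point of `E`, or all subsequences of some subsequence oscillate across a
common gap. -/
theorem exists_convergent_subseq_or_oscillatesIn (F : ℕ → S → ℝ) (E : Set S)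
    (hF : ∀ t ∈ E, ∃ K, ∀ n, |F n t| ≤ K) :
    (∃ u : ℕ → ℕ, StrictMono u ∧ ∀ t ∈ E, ∃ l, Tendsto (fun k => F (u k) t) atTop (𝓝 l)) ∨
      ∃ r s : ℝ, r < s ∧ ∃ M : Set ℕ, M.Infinite ∧ OscillatesIn (levelSets F r s) E M := by
  by_contra! hcon
  obtain ⟨hconv, hosc⟩ := hcon
  obtain ⟨q, hq⟩ := exists_surjective_nat (ℚ × ℚ)
  obtain ⟨u, hu, huP⟩ := exists_strictMono_forall_tail
    (fun j _ M => (q j).1 < (q j).2 →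
      ∀ t ∈ E, ¬ Oscillates (levelSets F (q j).1 (q j).2) t M)
    (fun j _ M M' hM h hlt t ht ho => h hlt t ht (ho.mono hM)) Set.univ Set.infinite_univ (by
      intro j N _ hN
      obtain ⟨n, hn⟩ := hN.nonempty
      have hinf := infinite_inter_Ioi hN n
      by_cases hlt : (q j).1 < (q j).2
      · have := hosc (q j).1 (q j).2 (by exact_mod_cast hlt) _ hinf
        simp only [OscillatesIn, not_forall, not_exists, not_and] at this
        obtain ⟨M', hM', hM'inf, ho⟩ := this
        exact ⟨n, hn, M', hM'.trans Set.inter_subset_left, hM'.trans Set.inter_subset_right,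
          hM'inf, fun _ => ho⟩
      · exact ⟨n, hn, _, Set.inter_subset_left, Set.inter_subset_right, hinf,
          fun h => absurd h hlt⟩)
  obtain ⟨t, htE, ht⟩ := hconv u hu
  obtain ⟨K, hK⟩ := hF t htE
  have hbdd : IsBoundedUnder (· ≤ ·) atTop fun k => F (u k) t :=
    isBoundedUnder_of ⟨K, fun n => (abs_le.1 (hK _)).2⟩
  have hbdd' : IsBoundedUnder (· ≥ ·) atTop fun k => F (u k) t :=
    isBoundedUnder_of ⟨-K, fun n => (abs_le.1 (hK _)).1⟩
  obtain ⟨l, hl⟩ : ∃ l, Tendsto (fun k => F (u k) t) atTop (𝓝 l) := by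
    refine tendsto_of_no_upcrossings Rat.denseRange_cast ?_ hbdd hbdd'
    rintro _ ⟨a, rfl⟩ _ ⟨b, rfl⟩ hab ⟨ha, hb⟩
    obtain ⟨j, hj⟩ := hq (a, b)
    have := (huP j).2
    rw [hj] at this
    refine this (by exact_mod_cast hab) t htE (Oscillates.of_finite_diff (N := u '' Set.univ) ?_
      (finite_image_sdiff_image_Ioi u _ j))
    rintro (_ | _)
    · refine ((Nat.frequently_atTop_iff_infinite.1 ha).image hu.injective.injOn).mono ?_
      rintro _ ⟨k, hk, rfl⟩
      exact ⟨⟨k, trivial, rfl⟩, hk⟩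
    · refine ((Nat.frequently_atTop_iff_infinite.1 hb).image hu.injective.injOn).mono ?_
      rintro _ ⟨k, hk, rfl⟩
      exact ⟨⟨k, trivial, rfl⟩, hk⟩
  exact ht l hl

end Independence

/-- **Rosenthal `ℓ₁` theorem** (real case): a bounded sequence without weakly Cauchy
subsequences has a subsequence satisfying a lower `ℓ₁` estimate. -/
theorem exists_weaklyCauchy_subseq_or_l1_lower_estimate {Z : Type*} [SeminormedAddCommGroup Z]
    [NormedSpace ℝ Z] (f : ℕ → Z) {K : ℝ} (hf : ∀ n, ‖f n‖ ≤ K) :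
    (∃ u : ℕ → ℕ, StrictMono u ∧ WeaklyCauchy Z (fun k => f (u k))) ∨
      ∃ u : ℕ → ℕ, StrictMono u ∧ ∃ δ : ℝ, 0 < δ ∧ ∀ (a : ℕ → ℝ) (k : ℕ),
        δ * ∑ j ∈ Finset.range k, |a j| ≤ ‖∑ j ∈ Finset.range k, a j • f (u j)‖ := by
  let F : ℕ → (Z →L[ℝ] ℝ) → ℝ := fun n φ => φ (f n)
  rcases exists_convergent_subseq_or_oscillatesIn F (Metric.closedBall 0 1) (by
    intro φ hφ
    refine ⟨1 * K, fun n => ?_⟩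
    exact (φ.le_opNorm _).trans (mul_le_mul (by simpa using hφ) (hf n) (norm_nonneg _) zero_le_one))
    with ⟨u, hu, hconv⟩ | ⟨r, s, hrs, M, hM, hosc⟩
  · left
    refine ⟨u, hu, fun φ => ?_⟩
    have hpos : 0 < ‖φ‖ + 1 := by positivity
    obtain ⟨l, hl⟩ := hconv ((‖φ‖ + 1)⁻¹ • φ) (by
      rw [mem_closedBall_zero_iff, norm_smul, norm_inv, Real.norm_of_nonneg hpos.le,
        inv_mul_le_one₀ hpos]
      linarith)
    refine ⟨(‖φ‖ + 1) * l, (hl.const_mul (‖φ‖ + 1)).congr fun n => ?_⟩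
    simp only [F, smul_apply, smul_eq_mul]
    field_simp
  · right
    obtain ⟨u, hu, hind⟩ := exists_independent_of_oscillatesIn hM hosc
    refine ⟨u, hu, (s - r) / 2, by linarith, fun a k => ?_⟩
    obtain ⟨φ, hφ, hφC⟩ := hind (fun j => decide (0 ≤ a j)) k
    obtain ⟨ψ, hψ, hψC⟩ := hind (fun j => !decide (0 ≤ a j)) k
    rw [mem_closedBall_zero_iff] at hφ hψ
    set z := ∑ j ∈ Finset.range k, a j • f (u j) with hz
    have hnorm : (φ - ψ) z ≤ 2 * ‖z‖ := by
      refine (le_abs_self _).trans (((φ - ψ).le_opNorm z).trans ?_)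
      gcongr
      exact (norm_sub_le _ _).trans (by linarith)
    have hsum : (s - r) * ∑ j ∈ Finset.range k, |a j| ≤ (φ - ψ) z := by
      rw [hz, map_sum, Finset.mul_sum]
      refine Finset.sum_le_sum fun j hj => ?_
      have h1 := hφC j (Finset.mem_range.1 hj)
      have h2 := hψC j (Finset.mem_range.1 hj)
      simp only [map_smul, smul_eq_mul, sub_apply]
      by_cases ha : 0 ≤ a j
      · simp only [levelSets, ha, F, decide_true, Bool.not_true, cond_true, cond_false,
          Set.mem_ofPred_eq] at h1 h2
        rw [abs_of_nonneg ha]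
        nlinarith
      · simp only [levelSets, ha, F, decide_false, Bool.not_false, cond_true, cond_false,
          Set.mem_ofPred_eq] at h1 h2
        rw [abs_of_neg (not_le.1 ha)]
        nlinarith
    linarith

/-- The element of `c₀` with coordinates `a`, for a sequence `a` tending to `0`. -/
def c0Mk (a : ℕ → ℝ) (ha : Tendsto a atTop (𝓝 0)) : C₀(ℕ, ℝ) where
  toFun := a
  continuous_toFun := continuous_of_discreteTopology
  zero_at_infty' := by rwa [cocompact_eq_atTop]

@[simp]
theorem c0Mk_apply (a : ℕ → ℝ) (ha : Tendsto a atTop (𝓝 0)) (n : ℕ) : c0Mk a ha n = a n := rfl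

theorem c0_tendsto (y : C₀(ℕ, ℝ)) : Tendsto y atTop (𝓝 0) := by
  simpa [cocompact_eq_atTop] using y.zero_at_infty'

theorem c0_norm_le {y : C₀(ℕ, ℝ)} {K : ℝ} (hK : 0 ≤ K) : ‖y‖ ≤ K ↔ ∀ n, |y n| ≤ K :=
  BoundedContinuousFunction.norm_le (f := y.toBCF) hK

theorem c0_abs_apply_le (y : C₀(ℕ, ℝ)) (n : ℕ) : |y n| ≤ ‖y‖ :=
  (c0_norm_le (norm_nonneg y)).1 le_rfl n

/-- The unit vector basis of `c₀`. -/
def c0Basis (n : ℕ) : C₀(ℕ, ℝ) :=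
  c0Mk (Pi.single n 1) (tendsto_const_nhds.congr' (by
    filter_upwards [eventually_gt_atTop n] with k hk
    rw [Pi.single_eq_of_ne hk.ne']))

theorem c0_sum_basis_apply (a : ℕ → ℝ) (s : Finset ℕ) (n : ℕ) :
    (∑ j ∈ s, a j • c0Basis j) n = if n ∈ s then a n else 0 := by
  have : (∑ j ∈ s, a j • c0Basis j) n = ∑ j ∈ s, (a j • c0Basis j) n := by
    induction s using Finset.induction_on with
    | empty => simp
    | insert i s hi ih => rw [Finset.sum_insert hi, Finset.sum_insert hi,
        ZeroAtInftyContinuousMap.add_apply, ih]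
  rw [this]
  simp [c0Basis, Pi.single_apply]

theorem c0_norm_sum_basis_le {a : ℕ → ℝ} {K : ℝ} (hK : 0 ≤ K) {s : Finset ℕ}
    (ha : ∀ n ∈ s, |a n| ≤ K) : ‖∑ j ∈ s, a j • c0Basis j‖ ≤ K := by
  rw [c0_norm_le hK]
  intro n
  rw [c0_sum_basis_apply]
  split_ifs with hn
  · exact ha n hn
  · simpa

theorem c0_tendsto_sum_basis (y : C₀(ℕ, ℝ)) :
    Tendsto (fun k => ∑ j ∈ Finset.range k, y j • c0Basis j) atTop (𝓝 y) := by
  rw [Metric.tendsto_atTop]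
  intro ε hε
  obtain ⟨N, hN⟩ := Metric.tendsto_atTop.1 (c0_tendsto y) (ε / 2) (half_pos hε)
  refine ⟨N, fun k hk => ?_⟩
  rw [dist_eq_norm]
  refine lt_of_le_of_lt ((c0_norm_le (half_pos hε).le).2 fun n => ?_) (half_lt_self hε)
  rw [ZeroAtInftyContinuousMap.sub_apply, c0_sum_basis_apply]
  split_ifs with hn
  · simpa using (half_pos hε).le
  · have := hN n (hk.trans (by simpa using hn))
    rw [Real.dist_eq, sub_zero] at this
    simpa using this.le

theorem c0_functional_sum_abs_le (ψ : C₀(ℕ, ℝ) →L[ℝ] ℝ) (k : ℕ) :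
    ∑ j ∈ Finset.range k, |ψ (c0Basis j)| ≤ ‖ψ‖ := by
  have h1 : ∑ j ∈ Finset.range k, |ψ (c0Basis j)| =
      ψ (∑ j ∈ Finset.range k, (SignType.sign (ψ (c0Basis j)) : ℝ) • c0Basis j) := by
    rw [map_sum]
    refine Finset.sum_congr rfl fun j _ => ?_
    rw [map_smul, smul_eq_mul, sign_mul_self]
  rw [h1]
  refine (le_abs_self _).trans ((ψ.le_opNorm _).trans ?_)
  refine mul_le_of_le_one_right (norm_nonneg _) (c0_norm_sum_basis_le zero_le_one fun n _ => ?_)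
  rcases lt_trichotomy (ψ (c0Basis n)) 0 with h | h | h <;> simp [h]

/-- A continuous linear map from a Banach space which is almost onto is onto. -/
theorem ContinuousLinearMap.surjective_of_approx {X Y : Type*} [NormedAddCommGroup X]
    [NormedSpace ℝ X] [CompleteSpace X] [NormedAddCommGroup Y] [NormedSpace ℝ Y]
    (T : X →L[ℝ] Y) (K : ℝ)
    (h : ∀ y, ∃ x, ‖x‖ ≤ K * ‖y‖ ∧ ‖y - T x‖ ≤ 2⁻¹ * ‖y‖) : Function.Surjective T := by
  intro y
  choose g hg hgr using h
  let r : ℕ → Y := fun k => (fun z => z - T (g z))^[k] y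
  have hr : ∀ k, r (k + 1) = r k - T (g (r k)) := fun k => Function.iterate_succ_apply' _ _ _
  have hrn : ∀ k, ‖r k‖ ≤ 2⁻¹ ^ k * ‖y‖ := by
    intro k
    induction k with
    | zero => simp [r]
    | succ k ih =>
      rw [hr, pow_succ', mul_assoc]
      exact (hgr _).trans (by gcongr)
  have hgeom : Summable fun k : ℕ => (2⁻¹ : ℝ) ^ k :=
    summable_geometric_of_lt_one (by norm_num) (by norm_num)
  have hsum : Summable fun k => g (r k) := by
    refine Summable.of_norm_bounded ((hgeom.mul_right ‖y‖).mul_left |K|) fun k => ?_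
    refine (hg _).trans ((mul_le_mul_of_nonneg_right (le_abs_self K) (norm_nonneg _)).trans ?_)
    gcongr
    exact hrn k
  have hpart : ∀ k, T (∑ j ∈ Finset.range k, g (r j)) = y - r k := by
    intro k
    induction k with
    | zero => simp [r]
    | succ k ih => rw [Finset.sum_range_succ, map_add, ih, hr]; abel
  have hr0 : Tendsto r atTop (𝓝 0) := by
    refine squeeze_zero_norm hrn ?_
    simpa using (tendsto_pow_atTop_nhds_zero_of_lt_one (r := (2⁻¹ : ℝ)) (by norm_num)
      (by norm_num)).mul_const ‖y‖
  refine ⟨∑' k, g (r k), tendsto_nhds_unique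
    ((T.continuous.tendsto _).comp hsum.hasSum.tendsto_sum_nat) ?_⟩
  simpa [Function.comp_def, hpart] using tendsto_const_nhds (x := y) |>.sub hr0

/-- An operator between real Banach spaces is onto if its adjoint is bounded below. -/
theorem ContinuousLinearMap.surjective_of_le_norm_comp {X Y : Type*} [NormedAddCommGroup X]
    [NormedSpace ℝ X] [CompleteSpace X] [NormedAddCommGroup Y] [NormedSpace ℝ Y]
    (T : X →L[ℝ] Y) {δ : ℝ} (hδ : 0 < δ) (h : ∀ ψ : Y →L[ℝ] ℝ, δ * ‖ψ‖ ≤ ‖ψ.comp T‖) :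
    Function.Surjective T := by
  have key : ∀ y, ‖y‖ < δ → y ∈ closure (T '' Metric.closedBall 0 1) := by
    intro y hy
    by_contra hcl
    have hconv : Convex ℝ (closure (T '' Metric.closedBall 0 1)) :=
      ((convex_closedBall (0 : X) 1).linear_image T.toLinearMap).closure
    obtain ⟨ψ, u, hu, huy⟩ := geometric_hahn_banach_closed_point hconv isClosed_closure hcl
    have hu' : ∀ x : X, ‖x‖ ≤ 1 → ψ (T x) < u := fun x hx =>
      hu _ (subset_closure ⟨x, by simpa using hx, rfl⟩)
    have hu0 : 0 < u := by simpa using hu' 0 (by simp)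
    have hnorm : ‖ψ.comp T‖ ≤ u := by
      refine ContinuousLinearMap.opNorm_le_of_unit_norm hu0.le fun x hx => ?_
      rw [Real.norm_eq_abs, abs_le]
      constructor
      · have := hu' (-x) (by simp [hx])
        simp only [map_neg] at this
        simp only [ContinuousLinearMap.comp_apply]
        linarith
      · exact (hu' x hx.le).le
    have h1 : ψ y ≤ ‖ψ‖ * ‖y‖ := (le_abs_self _).trans (ψ.le_opNorm y)
    have h2 := h ψ
    nlinarith [norm_nonneg ψ]
  refine T.surjective_of_approx (2 / δ) fun y => ?_
  rcases eq_or_ne y 0 with rfl | hy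
  · exact ⟨0, by simp⟩
  have hy' : 0 < ‖y‖ := norm_pos_iff.2 hy
  set c : ℝ := δ / (2 * ‖y‖) with hc
  have hc0 : 0 < c := by positivity
  obtain ⟨_, ⟨x, hx, rfl⟩, hxy⟩ := Metric.mem_closure_iff.1 (key (c • y) (by
    rw [norm_smul, Real.norm_of_nonneg hc0.le, hc]
    field_simp
    linarith)) (c * (2⁻¹ * ‖y‖)) (by positivity)
  rw [mem_closedBall_zero_iff] at hx
  refine ⟨c⁻¹ • x, ?_, ?_⟩
  · rw [norm_smul, norm_inv, Real.norm_of_nonneg hc0.le]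
    calc c⁻¹ * ‖x‖ ≤ c⁻¹ * 1 := by gcongr
      _ = 2 / δ * ‖y‖ := by rw [hc]; field_simp
  · have : y - T (c⁻¹ • x) = c⁻¹ • (c • y - T x) := by
      rw [map_smul, smul_sub, inv_smul_smul₀ hc0.ne']
    rw [this, norm_smul, norm_inv, Real.norm_of_nonneg hc0.le, inv_mul_le_iff₀ hc0,
      ← dist_eq_norm]
    exact hxy.le

section Quotient

variable {X : Type*} [NormedAddCommGroup X] [NormedSpace ℝ X]

/-- The operator into `c₀` induced by a bounded weak*-null sequence of functionals. -/
noncomputable def toC0 (f : ℕ → X →L[ℝ] ℝ) (hf : WeakStarConv X f 0) {K : ℝ}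
    (hK : ∀ n, ‖f n‖ ≤ K) : X →L[ℝ] C₀(ℕ, ℝ) :=
  LinearMap.mkContinuous
    { toFun := fun x => c0Mk (fun n => f n x) (hf x)
      map_add' := fun x y => by ext n; simp
      map_smul' := fun c x => by ext n; simp } K fun x => by
    refine (c0_norm_le (mul_nonneg ((norm_nonneg _).trans (hK 0)) (norm_nonneg x))).2 fun n => ?_
    exact ((f n).le_opNorm x).trans (mul_le_mul_of_nonneg_right (hK n) (norm_nonneg x))

@[simp]
theorem toC0_apply (f : ℕ → X →L[ℝ] ℝ) (hf : WeakStarConv X f 0) {K : ℝ}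
    (hK : ∀ n, ‖f n‖ ≤ K) (x : X) (n : ℕ) : toC0 f hf hK x n = f n x := rfl

/-- If the functionals satisfy a lower `ℓ₁` estimate, the induced operator is onto `c₀`. -/
theorem toC0_surjective [CompleteSpace X] (f : ℕ → X →L[ℝ] ℝ) (hf : WeakStarConv X f 0)
    {K : ℝ}
    (hK : ∀ n, ‖f n‖ ≤ K) {δ : ℝ} (hδ : 0 < δ)
    (hl1 : ∀ (a : ℕ → ℝ) (k : ℕ),
      δ * ∑ j ∈ Finset.range k, |a j| ≤ ‖∑ j ∈ Finset.range k, a j • f j‖) :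
    Function.Surjective (toC0 f hf hK) := by
  refine ContinuousLinearMap.surjective_of_le_norm_comp _ hδ fun ψ => ?_
  set a : ℕ → ℝ := fun j => ψ (c0Basis j) with ha
  have hK0 : 0 ≤ K := (norm_nonneg _).trans (hK 0)
  have hsa : Summable fun j => |a j| :=
    summable_of_sum_range_le (fun _ => abs_nonneg _) (c0_functional_sum_abs_le ψ)
  have hψ : ∀ y, Tendsto (fun k => ∑ j ∈ Finset.range k, y j * a j) atTop (𝓝 (ψ y)) := fun y => by
    simpa [Function.comp_def, map_sum, ha] using
      (ψ.continuous.tendsto y).comp (c0_tendsto_sum_basis y)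
  have hnorm : ‖ψ‖ ≤ ∑' j, |a j| := by
    refine ψ.opNorm_le_bound (tsum_nonneg fun _ => abs_nonneg _) fun y => ?_
    refine le_of_tendsto (hψ y).norm (Eventually.of_forall fun k => ?_)
    calc ‖∑ j ∈ Finset.range k, y j * a j‖ ≤ ∑ j ∈ Finset.range k, ‖y‖ * |a j| := by
          refine norm_sum_le_of_le _ fun j _ => ?_
          rw [Real.norm_eq_abs, abs_mul]
          gcongr
          exact c0_abs_apply_le y j
      _ = (∑ j ∈ Finset.range k, |a j|) * ‖y‖ := by rw [← Finset.mul_sum, mul_comm]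
      _ ≤ (∑' j, |a j|) * ‖y‖ := by
          gcongr
          exact hsa.sum_le_tsum _ fun _ _ => abs_nonneg _
  have hsf : Summable fun j => a j • f j := by
    refine Summable.of_norm_bounded (hsa.mul_right K) fun j => ?_
    rw [norm_smul, Real.norm_eq_abs]
    gcongr
    exact hK j
  have heq : ∑' j, a j • f j = ψ.comp (toC0 f hf hK) := by
    ext x
    refine tendsto_nhds_unique (((ContinuousLinearMap.apply ℝ ℝ x).continuous.tendsto _).comp
      hsf.hasSum.tendsto_sum_nat) ?_
    refine (hψ (toC0 f hf hK x)).congr fun k => ?_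
    simp [mul_comm]
  rw [← heq]
  calc δ * ‖ψ‖ ≤ δ * ∑' j, |a j| := by gcongr
    _ ≤ ‖∑' j, a j • f j‖ :=
      le_of_tendsto_of_tendsto' (hsa.hasSum.tendsto_sum_nat.const_mul δ)
        hsf.hasSum.tendsto_sum_nat.norm (hl1 a)

theorem hasQuotientC0_of_surjective [CompleteSpace X] (T : X →L[ℝ] C₀(ℕ, ℝ))
    (hT : Function.Surjective T) :
    HasQuotientC0 X := by
  refine ⟨T.ker, T.isClosed_ker, ⟨?_⟩⟩
  refine
    { LinearMap.quotKerEquivOfSurjective T.toLinearMap hT with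
      continuous_toFun := (T.ker.liftQL T le_rfl).continuous
      continuous_invFun := ?_ }
  have hq : Topology.IsQuotientMap T := T.isQuotientMap hT
  refine hq.continuous_iff.2 ?_
  refine (T.ker.mkQL.continuous).congr fun x => ?_
  exact ((LinearMap.quotKerEquivOfSurjective T.toLinearMap hT).symm_apply_apply _).symm

/-- The coordinate functionals of a quotient isomorphic to `c₀` form a weak*-null sequence
without weakly Cauchy subsequences. -/
theorem exists_weakStarConv_without_weaklyCauchy_subseq [CompleteSpace X]
    (h : HasQuotientC0 X) :
    ∃ f : ℕ → X →L[ℝ] ℝ, WeakStarConv X f 0 ∧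
      ∀ u : ℕ → ℕ, StrictMono u → ¬ WeaklyCauchy (X →L[ℝ] ℝ) (fun k => f (u k)) := by
  obtain ⟨M, -, ⟨e⟩⟩ := h
  let Q : X →L[ℝ] C₀(ℕ, ℝ) := (e : (X ⧸ M) →L[ℝ] C₀(ℕ, ℝ)).comp M.mkQL
  have hQ : Function.Surjective Q := e.surjective.comp M.mkQ_surjective
  obtain ⟨K, hK, hpre⟩ := Q.exists_preimage_norm_le hQ
  let f : ℕ → X →L[ℝ] ℝ := fun n => LinearMap.mkContinuous
    { toFun := fun x => Q x n
      map_add' := fun x y => by simp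
      map_smul' := fun c x => by simp } ‖Q‖
    fun x => (c0_abs_apply_le _ n).trans (Q.le_opNorm x)
  have hf : ∀ n x, f n x = Q x n := fun _ _ => rfl
  refine ⟨f, fun x => c0_tendsto (Q x), fun u hu hcauchy => ?_⟩
  let y : ℕ → C₀(ℕ, ℝ) := fun k => ∑ j ∈ (Finset.range k).image u,
    ((-1 : ℝ) ^ (Function.invFun u j)) • c0Basis j
  have hy : ∀ k, ‖y k‖ ≤ 1 := fun k => c0_norm_sum_basis_le zero_le_one (by simp)
  have hyu : ∀ j k, j < k → y k (u j) = (-1) ^ j := by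
    intro j k hjk
    simp only [y]
    rw [c0_sum_basis_apply (fun j => (-1 : ℝ) ^ (Function.invFun u j)),
      if_pos (Finset.mem_image_of_mem u (Finset.mem_range.2 hjk)),
      Function.leftInverse_invFun hu.injective]
  choose x hx hxK using fun k => hpre (y k)
  let J : ℕ → WeakDual ℝ (X →L[ℝ] ℝ) := fun k =>
    StrongDual.toWeakDual (NormedSpace.inclusionInDoubleDual ℝ X (x k))
  have hJ : ∀ k, J k ∈ WeakDual.toStrongDual ⁻¹'
      Metric.closedBall (0 : StrongDual ℝ (X →L[ℝ] ℝ)) K := by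
    intro k
    refine Set.mem_preimage.2 ((mem_closedBall_zero_iff (E := StrongDual ℝ (X →L[ℝ] ℝ))).2 ?_)
    refine (NormedSpace.double_dual_bound ℝ X (x k)).trans ((hxK k).trans ?_)
    exact mul_le_of_le_one_right hK.le (hy k)
  obtain ⟨Φ, -, hΦ⟩ := (WeakDual.isCompact_closedBall (0 : StrongDual ℝ (X →L[ℝ] ℝ)) K
    ).exists_mapClusterPt_of_frequently (l := atTop) (f := J)
    (Eventually.of_forall hJ).frequently
  have hval : ∀ j, Φ (f (u j)) = (-1) ^ j := by
    intro j
    have hcl : MapClusterPt (Φ (f (u j))) atTop (fun k => J k (f (u j))) :=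
      hΦ.continuousAt_comp (f := fun Ψ : WeakDual ℝ (X →L[ℝ] ℝ) => Ψ (f (u j)))
        (WeakDual.eval_continuous _).continuousAt
    have hlim : Tendsto (fun k => J k (f (u j))) atTop (𝓝 ((-1) ^ j)) := by
      refine tendsto_const_nhds.congr' ?_
      filter_upwards [eventually_gt_atTop j] with k hk
      change _ = f (u j) (x k)
      rw [hf, hx, hyu j k hk]
    obtain ⟨v, hv, hvlim⟩ := hcl.tendsto_subseq
    exact tendsto_nhds_unique hvlim (hlim.comp hv.tendsto_atTop)
  obtain ⟨l, hl⟩ := hcauchy (WeakDual.toStrongDual Φ)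
  replace hl : Tendsto (fun j : ℕ => (-1 : ℝ) ^ j) atTop (𝓝 l) := hl.congr hval
  have h1 : l = -l := by
    refine tendsto_nhds_unique (hl.comp (tendsto_add_atTop_nat 1)) (hl.neg.congr fun j => ?_)
    simp [pow_succ]
  have h0 : l = 0 := by linarith
  have := tendsto_nhds_unique hl.abs (by simp : Tendsto (fun j : ℕ => |(-1 : ℝ) ^ j|) atTop (𝓝 1))
  simp [h0] at this

end Quotient

/-- `X` has no quotient isomorphic to `c₀` iff every weak*-convergent sequence in `X*`
has a weakly Cauchy subsequence. -/
theorem no_c0_quotient_iff_weaklyCauchy_subseq (X : Type*)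
    [NormedAddCommGroup X] [NormedSpace ℝ X] [CompleteSpace X] :
    ¬ HasQuotientC0 X ↔
      ∀ (f : ℕ → X →L[ℝ] ℝ) (g : X →L[ℝ] ℝ), WeakStarConv X f g →
        ∃ φ : ℕ → ℕ, StrictMono φ ∧ WeaklyCauchy (X →L[ℝ] ℝ) (fun k => f (φ k)) := by
  constructor
  · intro hX f g hfg
    have hnull : WeakStarConv X (fun n => f n - g) 0 := fun x => by
      simpa using (hfg x).sub_const (g x)
    obtain ⟨K, hK⟩ := banach_steinhaus (g := fun n => f n - g) fun x => by
      obtain ⟨C, hC⟩ := (hnull x).norm.bddAbove_range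
      exact ⟨C, fun n => hC ⟨n, rfl⟩⟩
    rcases exists_weaklyCauchy_subseq_or_l1_lower_estimate _ hK with
      ⟨u, hu, hcauchy⟩ | ⟨u, hu, δ, hδ, hl1⟩
    · refine ⟨u, hu, fun φ => ?_⟩
      obtain ⟨l, hl⟩ := hcauchy φ
      exact ⟨l + φ g, (hl.add_const (φ g)).congr fun n => by simp⟩
    · exact absurd (hasQuotientC0_of_surjective _ (toC0_surjective (fun k => f (u k) - g)
        (fun x => (hnull x).comp hu.tendsto_atTop) (fun k => hK (u k)) hδ hl1)) hX
  · intro h hX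
    obtain ⟨f, hf, hno⟩ := exists_weakStarConv_without_weaklyCauchy_subseq hX
    obtain ⟨u, hu, hcauchy⟩ := h f 0 hf
    exact hno u hu hcauchy
end

section
/- Every Grothendieck Banach space admitting a Markushevich basis is reflexive. -/
open Filter Topology ZeroAtInfty

theorem norm_le_of_forall_apply_le {Z : Type*} [SeminormedAddCommGroup Z] [NormedSpace ℝ Z]
    {w : Z →L[ℝ] ℝ} {u : ℝ} (h : ∀ z, ‖z‖ ≤ 1 → w z ≤ u) : ‖w‖ ≤ u := by
  have hu : 0 ≤ u := by simpa using h 0 (by simp)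
  refine ContinuousLinearMap.opNorm_le_of_unit_norm hu fun z hz => ?_
  rw [Real.norm_eq_abs, abs_le']
  exact ⟨h z hz.le, by simpa using h (-z) (by simp [hz])⟩

/-- **Mazur's theorem** for sequences: closed convex sets are weakly sequentially closed. -/
theorem WeakConv.mem_of_isClosed_of_convex {Z : Type*} [SeminormedAddCommGroup Z] [NormedSpace ℝ Z]
    {z : ℕ → Z} {y : Z} (h : WeakConv Z z y) {s : Set Z} (hs : IsClosed s) (hconv : Convex ℝ s)
    (hz : ∀ n, z n ∈ s) : y ∈ s := by
  by_contra hy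
  obtain ⟨φ, u, hu, huy⟩ := geometric_hahn_banach_closed_point hconv hs hy
  exact huy.not_ge (le_of_tendsto' (h φ) fun n => (hu _ (hz n)).le)

/-- A functional at distance more than `θ` from the span of finitely many functionals exceeds `θ`
somewhere on the unit ball of the intersection of their kernels. -/
theorem exists_lt_apply_of_forall_mem_span {Z : Type*} [SeminormedAddCommGroup Z] [NormedSpace ℝ Z]
    {ι : Type*} [Finite ι] (v : ι → Z →L[ℝ] ℝ) (Φ : Z →L[ℝ] ℝ) {θ : ℝ}
    (h : ∀ w ∈ Submodule.span ℝ (Set.range v), θ < ‖Φ - w‖) :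
    ∃ z, ‖z‖ ≤ 1 ∧ θ < Φ z ∧ ∀ i, v i z = 0 := by
  by_contra! hcon
  let K : Submodule ℝ Z := ⨅ i, LinearMap.ker (v i : Z →ₗ[ℝ] ℝ)
  have hK : ∀ z ∈ K, ∀ i, v i z = 0 := fun z hz i => by
    simpa using (Submodule.mem_iInf _).1 hz i
  have hnorm : ‖Φ.comp K.subtypeL‖ ≤ θ := by
    refine norm_le_of_forall_apply_le fun z hz => ?_
    by_contra! hlt
    obtain ⟨i, hi⟩ := hcon z hz hlt
    exact hi (hK z z.2 i)
  obtain ⟨Ψ, hΨ, hΨn⟩ := exists_extension_norm_eq K (Φ.comp K.subtypeL)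
  have hmem : ((Φ - Ψ : Z →L[ℝ] ℝ) : Z →ₗ[ℝ] ℝ) ∈
      Submodule.span ℝ (Set.range fun i => (v i : Z →ₗ[ℝ] ℝ)) := by
    refine mem_span_of_iInf_ker_le_ker fun z hz => ?_
    have := hΨ ⟨z, hz⟩
    simp at this
    simp [this]
  have hmem' : Φ - Ψ ∈ Submodule.span ℝ (Set.range v) := by
    obtain ⟨k, hk, hkΦ⟩ : ((Φ - Ψ : Z →L[ℝ] ℝ) : Z →ₗ[ℝ] ℝ) ∈ (Submodule.span ℝ (Set.range v)).map
        (ContinuousLinearMap.coeLM ℝ : (Z →L[ℝ] ℝ) →ₗ[ℝ] (Z →ₗ[ℝ] ℝ)) := by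
      rw [Submodule.map_span, ← Set.range_comp]
      exact hmem
    exact ContinuousLinearMap.coe_injective hkΦ ▸ hk
  have := h _ hmem'
  rw [sub_sub_cancel, hΨn] at this
  exact this.not_ge hnorm

/-- A finite-dimensional form of **Goldstine's theorem**. -/
theorem exists_forall_lt_apply_of_forall_lt {Z : Type*} [SeminormedAddCommGroup Z]
    [NormedSpace ℝ Z] {ι : Type*} [Finite ι] (ψ : ι → Z →L[ℝ] ℝ) (Φ : (Z →L[ℝ] ℝ) →L[ℝ] ℝ) {θ : ℝ}
    (h : ∀ i, θ < Φ (ψ i)) : ∃ z, ‖z‖ ≤ ‖Φ‖ ∧ ∀ i, θ < ψ i z := by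
  classical
  have := Fintype.ofFinite ι
  let T : Z →L[ℝ] (ι → ℝ) := ContinuousLinearMap.pi ψ
  let A : Set (ι → ℝ) := T '' Metric.closedBall 0 ‖Φ‖
  have hA : Convex ℝ A := (convex_closedBall _ _).linear_image (T : Z →ₗ[ℝ] (ι → ℝ))
  have hp : (fun i => Φ (ψ i)) ∈ closure A := by
    by_contra hp
    obtain ⟨c, u, hu, hup⟩ := geometric_hahn_banach_closed_point hA.closure isClosed_closure hp
    have hc : ∀ q, c q = ∑ i, c (Pi.single i 1) * q i := fun q => by
      conv_lhs => rw [← Finset.univ_sum_single q, map_sum]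
      refine Finset.sum_congr rfl fun i _ => ?_
      rw [mul_comm, ← smul_eq_mul, ← map_smul, ← Pi.single_smul, smul_eq_mul, mul_one]
    let w : Z →L[ℝ] ℝ := ∑ i, c (Pi.single i 1) • ψ i
    have hw : ∀ z, c (T z) = w z := fun z => by
      rw [hc]; simp [w, T]
    have hwΦ : c (fun i => Φ (ψ i)) = Φ w := by
      rw [hc]; simp [w]
    have hle : ‖‖Φ‖ • w‖ ≤ u := by
      refine norm_le_of_forall_apply_le fun z hz => ?_
      have hz' : ‖‖Φ‖ • z‖ ≤ ‖Φ‖ := by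
        rw [norm_smul, Real.norm_of_nonneg (norm_nonneg Φ)]
        exact mul_le_of_le_one_right (norm_nonneg _) hz
      have := hu (T (‖Φ‖ • z)) (subset_closure ⟨_, by simpa using hz', rfl⟩)
      rw [hw, map_smul] at this
      exact this.le
    rw [hwΦ] at hup
    rw [norm_smul, Real.norm_of_nonneg (norm_nonneg Φ)] at hle
    exact (hup.trans_le ((le_abs_self _).trans (Φ.le_opNorm w))).not_ge hle
  have hopen : IsOpen {q : ι → ℝ | ∀ i, θ < q i} := by
    simp only [Set.ofPred_forall]
    exact isOpen_iInter_of_finite fun i => isOpen_lt continuous_const (continuous_apply i)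
  obtain ⟨_, hq, z, hz, rfl⟩ := mem_closure_iff.1 hp _ hopen h
  exact ⟨z, by simpa using hz, hq⟩

/-- One half of the **Eberlein–Šmulian theorem**: a Banach space in which every bounded sequence has
a weakly convergent subsequence is reflexive. -/
theorem surjective_inclusionInDoubleDual_of_forall_exists_weakConv {Z : Type*}
    [NormedAddCommGroup Z] [NormedSpace ℝ Z] [CompleteSpace Z]
    (h : ∀ (z : ℕ → Z) (C : ℝ), (∀ n, ‖z n‖ ≤ C) →
      ∃ (φ : ℕ → ℕ) (y : Z), StrictMono φ ∧ WeakConv Z (z ∘ φ) y) :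
    Function.Surjective (NormedSpace.inclusionInDoubleDual ℝ Z) := by
  intro Φ
  by_contra hΦ
  let J := NormedSpace.inclusionInDoubleDual ℝ Z
  have hclosed : IsClosed (Set.range J) :=
    (NormedSpace.inclusionInDoubleDualLi (E := Z) ℝ).isometry.isUniformInducing.isComplete_range.isClosed
  have hpos : 0 < Metric.infDist Φ (Set.range J) :=
    (hclosed.notMem_iff_infDist_pos (Set.range_nonempty J)).1 hΦ
  obtain ⟨θ, hθ, hθΦ⟩ := exists_between hpos
  have hdist : ∀ z, θ < ‖Φ - J z‖ := fun z => by
    exact (hθΦ.trans_le (Metric.infDist_le_dist_of_mem (Set.mem_range_self z))).trans_eq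
      (dist_eq_norm Φ (J z))
  obtain ⟨a, ha, har⟩ := exists_seq_of_forall_finset_exists
    (fun p : (Z →L[ℝ] ℝ) × Z => ‖p.1‖ ≤ 1 ∧ θ < Φ p.1 ∧ ‖p.2‖ ≤ ‖Φ‖ ∧ θ < p.1 p.2)
    (fun p q => q.1 p.2 = 0 ∧ θ < p.1 q.2) (by
      classical
      intro s hs
      obtain ⟨ψ, hψ, hψΦ, hψs⟩ := exists_lt_apply_of_forall_mem_span
        (fun p : s => J p.1.2) Φ (θ := θ) (by
          intro w hw
          have hle : Submodule.span ℝ (Set.range fun p : s => J p.1.2) ≤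
              LinearMap.range (J : Z →ₗ[ℝ] _) := by
            rw [Submodule.span_le]
            rintro _ ⟨p, rfl⟩
            exact ⟨p.1.2, rfl⟩
          obtain ⟨z, rfl⟩ := hle hw
          exact hdist z)
      obtain ⟨z, hz, hzs⟩ := exists_forall_lt_apply_of_forall_lt
        (fun o : Option s => o.elim ψ fun p => p.1.1) Φ (θ := θ) (by
          rintro (_ | p)
          · exact hψΦ
          · exact (hs p.1 p.2).2.1)
      exact ⟨(ψ, z), ⟨hψ, hψΦ, hz, hzs none⟩, fun p hp =>
        ⟨hψs ⟨p, hp⟩, hzs (some ⟨p, hp⟩)⟩⟩)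
  obtain ⟨φ, y, hφ, hy⟩ := h (fun n => (a n).2) ‖Φ‖ fun n => (ha n).2.2.1
  have hge : ∀ k, θ ≤ (a k).1 y := fun k => by
    refine ge_of_tendsto (hy (a k).1) ?_
    filter_upwards [eventually_gt_atTop k] with n hn
    exact (har k (φ n) (hn.trans_le (hφ.id_le n))).2.le
  let S := Submodule.span ℝ (Set.range fun n => (a n).2)
  have hyS : y ∈ closure (S : Set Z) := by
    refine hy.mem_of_isClosed_of_convex isClosed_closure S.convex.closure fun n => ?_
    exact subset_closure (Submodule.subset_span ⟨φ n, rfl⟩)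
  have hS : ∀ w ∈ S, ∀ᶠ n in atTop, (a n).1 w = 0 := by
    intro w hw
    induction hw using Submodule.span_induction with
    | mem w hw =>
      obtain ⟨m, rfl⟩ := hw
      filter_upwards [eventually_gt_atTop m] with n hn using (har m n hn).1
    | zero => simp
    | add u v _ _ hu hv => filter_upwards [hu, hv] with n h₁ h₂; simp [h₁, h₂]
    | smul c u _ hu => filter_upwards [hu] with n h₁; simp [h₁]
  obtain ⟨w, hw, hyw⟩ := Metric.mem_closure_iff.1 hyS θ hθ
  obtain ⟨n, hn⟩ := (hS w hw).exists
  have hle : (a n).1 y ≤ ‖y - w‖ := by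
    rw [← sub_zero ((a n).1 y), ← hn, ← map_sub]
    exact (le_abs_self _).trans ((a n).1.le_of_opNorm_le_of_le (ha n).1 le_rfl |>.trans (by simp))
  rw [dist_eq_norm] at hyw
  linarith [hge n]

/-- A bounded operator on a Banach space is onto if every vector is approximated to within half its
norm by the image of a vector of no larger norm. -/
theorem surjective_of_forall_exists_norm_sub_le {X W : Type*} [NormedAddCommGroup X]
    [NormedSpace ℝ X] [CompleteSpace X] [NormedAddCommGroup W] [NormedSpace ℝ W] (R : X →L[ℝ] W)
    (h : ∀ w, ∃ x, ‖x‖ ≤ ‖w‖ ∧ ‖w - R x‖ ≤ ‖w‖ / 2) : Function.Surjective R := by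
  choose s hs hsR using h
  intro w
  let r : ℕ → W := fun n => (fun v => v - R (s v))^[n] w
  have hr : ∀ n, r (n + 1) = r n - R (s (r n)) := fun n => Function.iterate_succ_apply' _ _ _
  have hrn : ∀ n, ‖r n‖ ≤ ‖w‖ * (1 / 2) ^ n := by
    intro n
    induction n with
    | zero => simp [r]
    | succ n ih =>
      rw [hr, pow_succ]
      linarith [hsR (r n)]
  have hgeom : Summable fun n : ℕ => ‖w‖ * (1 / 2 : ℝ) ^ n := summable_geometric_two.mul_left _
  have hsum : Summable fun n => s (r n) :=
    Summable.of_norm_bounded hgeom fun n => (hs _).trans (hrn n)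
  have hr0 : Tendsto r atTop (𝓝 0) := squeeze_zero_norm hrn hgeom.tendsto_atTop_zero
  have hpart : ∀ n, ∑ i ∈ Finset.range n, R (s (r i)) = w - r n := by
    intro n
    induction n with
    | zero => simp [r]
    | succ n ih => rw [Finset.sum_range_succ, ih, hr]; abel
  refine ⟨∑' n, s (r n), tendsto_nhds_unique (hsum.hasSum.mapL R).tendsto_sum_nat ?_⟩
  simp only [hpart]
  simpa using hr0.const_sub w

/-- A Banach space is reflexive if its dual contains a total reflexive subspace. -/
theorem surjective_inclusionInDoubleDual_of_total {X : Type*} [NormedAddCommGroup X]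
    [NormedSpace ℝ X] [CompleteSpace X] {Y : Type*} [NormedAddCommGroup Y] [NormedSpace ℝ Y]
    (j : Y →ₗᵢ[ℝ] (X →L[ℝ] ℝ)) (htotal : ∀ x : X, (∀ g, j g x = 0) → x = 0)
    (hY : Function.Surjective (NormedSpace.inclusionInDoubleDual ℝ Y)) :
    Function.Surjective (NormedSpace.inclusionInDoubleDual ℝ X) := by
  let R : X →L[ℝ] (Y →L[ℝ] ℝ) :=
    (ContinuousLinearMap.precomp ℝ j.toContinuousLinearMap).comp (NormedSpace.inclusionInDoubleDual ℝ X)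
  have hR : ∀ x (g : Y), R x g = j g x := fun x g => rfl
  have hball : ∀ r : ℝ, 0 < r → ∀ F : Y →L[ℝ] ℝ, ‖F‖ ≤ r →
      F ∈ closure (R '' Metric.closedBall 0 r) := by
    intro r hr F hF
    by_contra hF'
    obtain ⟨G, u, hu, huF⟩ := geometric_hahn_banach_closed_point
      ((convex_closedBall _ _).linear_image (R : X →ₗ[ℝ] (Y →L[ℝ] ℝ))).closure isClosed_closure hF'
    obtain ⟨g, rfl⟩ := hY G
    rw [NormedSpace.dual_def] at huF
    have hg : ‖r • j g‖ ≤ u := by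
      refine norm_le_of_forall_apply_le fun x hx => ?_
      have hx' : r • x ∈ Metric.closedBall (0 : X) r := by
        simpa [norm_smul, abs_of_pos hr] using mul_le_of_le_one_right hr.le hx
      have := hu (R (r • x)) (subset_closure ⟨_, hx', rfl⟩)
      rw [NormedSpace.dual_def, hR, map_smul] at this
      exact this.le
    rw [norm_smul, Real.norm_of_nonneg hr.le, j.norm_map] at hg
    have hFg : F g ≤ r * ‖g‖ :=
      (le_abs_self _).trans (F.le_of_opNorm_le hF g)
    linarith
  have hsurj : Function.Surjective R := by
    refine surjective_of_forall_exists_norm_sub_le R fun F => ?_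
    rcases eq_or_ne F 0 with rfl | hF
    · exact ⟨0, by simp⟩
    have hF' : 0 < ‖F‖ := norm_pos_iff.2 hF
    obtain ⟨_, ⟨x, hx, rfl⟩, hxF⟩ :=
      Metric.mem_closure_iff.1 (hball _ hF' F le_rfl) (‖F‖ / 2) (half_pos hF')
    rw [dist_eq_norm] at hxF
    exact ⟨x, by simpa using hx, hxF.le⟩
  have hinj : LinearMap.ker (R : X →ₗ[ℝ] (Y →L[ℝ] ℝ)) = ⊥ := by
    refine LinearMap.ker_eq_bot'.2 fun x hx => htotal x fun g => ?_
    exact congrArg (fun F : Y →L[ℝ] ℝ => F g) hx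
  let e := ContinuousLinearEquiv.ofBijective R hinj (LinearMap.range_eq_top.2 hsurj)
  have he : ∀ x, e x = R x := fun x => rfl
  have htop : ∀ k : X →L[ℝ] ℝ, ∃ g, j g = k := by
    intro k
    obtain ⟨g, hg⟩ := hY (k.comp (e.symm : (Y →L[ℝ] ℝ) →L[ℝ] X))
    refine ⟨g, ContinuousLinearMap.ext fun x => ?_⟩
    have := congrArg (fun G : (Y →L[ℝ] ℝ) →L[ℝ] ℝ => G (e x)) hg
    simp only [NormedSpace.dual_def, ContinuousLinearMap.comp_apply,
      ContinuousLinearEquiv.coe_coe, e.symm_apply_apply] at this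
    rw [← this, he, hR]
  intro Φ
  obtain ⟨x, hx⟩ := hsurj (Φ.comp j.toContinuousLinearMap)
  refine ⟨x, ContinuousLinearMap.ext fun k => ?_⟩
  obtain ⟨g, rfl⟩ := htop k
  exact congrArg (fun F : Y →L[ℝ] ℝ => F g) hx

/-- A bounded sequence of functionals on a Banach space converging pointwise on a set with dense
span is weak* convergent. -/
theorem exists_weakStarConv_of_forall_tendsto {X : Type*} [NormedAddCommGroup X] [NormedSpace ℝ X]
    [CompleteSpace X] {g : ℕ → X →L[ℝ] ℝ} {C : ℝ} (hC : ∀ n, ‖g n‖ ≤ C) {s : Set X}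
    (hs : (Submodule.span ℝ s).topologicalClosure = ⊤)
    (h : ∀ x ∈ s, ∃ l, Tendsto (fun n => g n x) atTop (𝓝 l)) :
    ∃ g₀, WeakStarConv X g g₀ := by
  have hspan : ∀ x ∈ Submodule.span ℝ s, ∃ l, Tendsto (fun n => g n x) atTop (𝓝 l) := by
    intro x hx
    induction hx using Submodule.span_induction with
    | mem x hx => exact h x hx
    | zero => exact ⟨0, by simp⟩
    | add u v _ _ hu hv =>
      obtain ⟨a, ha⟩ := hu
      obtain ⟨b, hb⟩ := hv
      exact ⟨a + b, by simpa using ha.add hb⟩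
    | smul c u _ hu =>
      obtain ⟨a, ha⟩ := hu
      exact ⟨c • a, by simpa using ha.const_smul c⟩
  have hC0 : 0 ≤ C := (norm_nonneg _).trans (hC 0)
  have hall : ∀ x, ∃ l, Tendsto (fun n => g n x) atTop (𝓝 l) := by
    intro x
    refine cauchySeq_tendsto_of_complete (Metric.cauchySeq_iff'.2 fun ε hε => ?_)
    have hx : x ∈ closure (Submodule.span ℝ s : Set X) := by
      rw [← Submodule.topologicalClosure_coe, hs]; trivial
    obtain ⟨y, hy, hxy⟩ := Metric.mem_closure_iff.1 hx (ε / (3 * (C + 1))) (by positivity)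
    obtain ⟨l, hl⟩ := hspan y hy
    obtain ⟨N, hN⟩ := Metric.cauchySeq_iff'.1 hl.cauchySeq (ε / 3) (by positivity)
    have hclose : ∀ n, dist (g n x) (g n y) < ε / 3 := fun n => by
      rw [dist_eq_norm, ← map_sub]
      rw [dist_eq_norm, lt_div_iff₀ (by positivity)] at hxy
      have := (g n).le_of_opNorm_le (hC n) (x - y)
      nlinarith [norm_nonneg (x - y)]
    refine ⟨N, fun n hn => ?_⟩
    have h₁ := hclose N
    rw [dist_comm] at h₁
    linarith [dist_triangle4 (g n x) (g n y) (g N y) (g N x), hclose n, hN n hn]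
  choose l hl using hall
  exact ⟨continuousLinearMapOfTendsto (σ₁₂ := RingHom.id ℝ) g (tendsto_pi_nhds.2 hl), hl⟩

theorem countable_setOf_apply_ne_zero_of_mem_topologicalClosure_span {X I : Type*}
    [NormedAddCommGroup X] [NormedSpace ℝ X] {x : I → X} {f : I → X →L[ℝ] ℝ}
    (hbi : ∀ i j, i ≠ j → f i (x j) = 0) {g : X →L[ℝ] ℝ}
    (hg : g ∈ (Submodule.span ℝ (Set.range f)).topologicalClosure) :
    {i | g (x i) ≠ 0}.Countable := by
  have hfin : ∀ k ∈ Submodule.span ℝ (Set.range f), {i | k (x i) ≠ 0}.Finite := by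
    intro k hk
    induction hk using Submodule.span_induction with
    | mem k hk =>
      obtain ⟨j, rfl⟩ := hk
      exact (Set.finite_singleton j).subset fun i hi => by
        by_contra hij
        exact hi (hbi j i (Ne.symm hij))
    | zero => simp
    | add u v _ _ hu hv =>
      refine (hu.union hv).subset fun i hi => ?_
      by_contra hcon
      simp only [Set.mem_union, Set.mem_ofPred_eq, not_or, not_not] at hcon
      exact hi (by simp [hcon.1, hcon.2])
    | smul c u _ hu =>
      refine hu.subset fun i hi hcon => hi (by simp [hcon])
  obtain ⟨k, hk, hkg⟩ := mem_closure_iff_seq_limit.1 hg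
  refine (Set.countable_iUnion fun n => (hfin (k n) (hk n)).countable).mono fun i hi => ?_
  by_contra hcon
  simp only [Set.mem_iUnion, Set.mem_ofPred_eq, not_exists, not_not] at hcon
  have hlim : Tendsto (fun n => k n (x i)) atTop (𝓝 (g (x i))) :=
    ((ContinuousLinearMap.apply ℝ ℝ (x i)).continuous.tendsto g).comp hkg
  simp only [hcon] at hlim
  exact hi (tendsto_nhds_unique hlim tendsto_const_nhds)

/-- A bounded sequence of functionals, each nonzero at only countably many points of a fundamental
family, has a weak* convergent subsequence. -/
theorem exists_subseq_weakStarConv {X I : Type*} [NormedAddCommGroup X] [NormedSpace ℝ X]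
    [CompleteSpace X] {x : I → X} (hfund : (Submodule.span ℝ (Set.range x)).topologicalClosure = ⊤)
    {g : ℕ → X →L[ℝ] ℝ} {C : ℝ} (hC : ∀ n, ‖g n‖ ≤ C)
    (hcount : ∀ n, {i | g n (x i) ≠ 0}.Countable) :
    ∃ (φ : ℕ → ℕ) (g₀ : X →L[ℝ] ℝ), StrictMono φ ∧ WeakStarConv X (g ∘ φ) g₀ := by
  let J : Set I := ⋃ n, {i | g n (x i) ≠ 0}
  have : Countable J := (Set.countable_iUnion hcount).to_subtype
  obtain ⟨a, -, φ, hφ, hlim⟩ := (isCompact_univ_pi fun i : J =>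
    isCompact_closedBall (0 : ℝ) (C * ‖x i‖)).tendsto_subseq
    (x := fun n (i : J) => g n (x i)) fun n i _ => by
      simpa using (g n).le_of_opNorm_le (hC n) (x i)
  obtain ⟨g₀, hg₀⟩ := exists_weakStarConv_of_forall_tendsto (g := g ∘ φ) (fun n => hC (φ n)) hfund
    (by
      rintro _ ⟨i, rfl⟩
      by_cases hi : i ∈ J
      · exact ⟨a ⟨i, hi⟩, tendsto_pi_nhds.1 hlim ⟨i, hi⟩⟩
      · simp only [J, Set.mem_iUnion, Set.mem_ofPred_eq, not_exists, not_not] at hi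
        exact ⟨0, by simp [hi]⟩)
  exact ⟨φ, g₀, hφ, hg₀⟩

/-- Johnson: every Grothendieck space admitting a Markushevich basis is reflexive. -/
theorem grothendieck_with_Mbasis_reflexive (X : Type*)
    [NormedAddCommGroup X] [NormedSpace ℝ X] [CompleteSpace X]
    (hX : IsGrothendieck X)
    (I : Type*) (x : I → X) (f : I → X →L[ℝ] ℝ)
    (hbi1 : ∀ i, f i (x i) = 1)
    (hbi2 : ∀ i j, i ≠ j → f i (x j) = 0)
    (hfund : (Submodule.span ℝ (Set.range x)).topologicalClosure = ⊤)
    (htotal : ∀ y : X, (∀ i, f i y = 0) → y = 0) :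
    Function.Surjective (NormedSpace.inclusionInDoubleDual ℝ X) := by
  let Y : Submodule ℝ (X →L[ℝ] ℝ) := (Submodule.span ℝ (Set.range f)).topologicalClosure
  have hYclosed : IsClosed (Y : Set (X →L[ℝ] ℝ)) := Submodule.isClosed_topologicalClosure _
  have : CompleteSpace Y := hYclosed.completeSpace_coe
  have hfY : ∀ i, f i ∈ Y := fun i =>
    Submodule.le_topologicalClosure _ (Submodule.subset_span ⟨i, rfl⟩)
  refine surjective_inclusionInDoubleDual_of_total (Y := Y) Y.subtypeₗᵢ
    (fun y hy => htotal y fun i => hy (⟨f i, hfY i⟩ : Y)) ?_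
  refine surjective_inclusionInDoubleDual_of_forall_exists_weakConv fun z C hC => ?_
  obtain ⟨φ, g, hφ, hg⟩ := exists_subseq_weakStarConv hfund (g := fun n => (z n : X →L[ℝ] ℝ)) hC
    fun n => countable_setOf_apply_ne_zero_of_mem_topologicalClosure_span hbi2 (z n).2
  have hweak := hX _ _ hg
  have hgY : g ∈ Y := hweak.mem_of_isClosed_of_convex hYclosed Y.convex fun n => (z (φ n)).2
  refine ⟨φ, ⟨g, hgY⟩, hφ, fun Ψ => ?_⟩
  obtain ⟨Ψ', hΨ', -⟩ := exists_extension_norm_eq Y Ψ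
  have := hweak Ψ'
  simpa only [Function.comp_apply, hΨ', ← hΨ' ⟨g, hgY⟩] using this
end

section
/- If X is a Banach space such that the set At(X) of norm-attaining functionals equals all of X*, then X is reflexive (James's theorem); consequently, for a non-reflexive Grothendieck space X there exists a functional in X* not attaining its norm. -/
open Filter Topology ZeroAtInfty

open Set Metric

section James

variable {X : Type*} [NormedAddCommGroup X] [NormedSpace ℝ X]

/-- Finite form of **Goldstine's theorem**: an element of the unit ball of the bidual can be
approximated on finitely many functionals by points of the unit ball. -/
theorem exists_norm_le_one_forall_abs_sub_lt (φ : StrongDual ℝ (StrongDual ℝ X)) (hφ : ‖φ‖ ≤ 1)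
    (s : Finset (StrongDual ℝ X)) {ε : ℝ} (hε : 0 < ε) :
    ∃ x : X, ‖x‖ ≤ 1 ∧ ∀ f ∈ s, |f x - φ f| < ε := by
  classical
  let T : X →L[ℝ] (s → ℝ) := ContinuousLinearMap.pi fun f => (f : StrongDual ℝ X)
  let y : s → ℝ := fun f => φ f
  have hy : y ∈ closure (T '' closedBall 0 1) := by
    by_contra hy
    obtain ⟨g, u, hg, hu⟩ := geometric_hahn_banach_closed_point
      ((convex_closedBall (0 : X) 1).linear_image T.toLinearMap).closure isClosed_closure hy
    have hgT (x : X) (hx : ‖x‖ ≤ 1) : g (T x) < u :=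
      hg _ (subset_closure ⟨x, by simpa using hx, rfl⟩)
    have hu0 : 0 < u := by simpa using hgT 0 (by simp)
    have hnorm : ‖g.comp T‖ ≤ u := by
      refine ContinuousLinearMap.opNorm_le_of_unit_norm hu0.le fun x hx => ?_
      have h₁ := hgT x hx.le
      have h₂ := hgT (-x) (by simp [hx])
      simp only [map_neg] at h₂
      rw [Real.norm_eq_abs, abs_le]
      exact ⟨by simp; linarith, h₁.le⟩
    have hsum : g.comp T = ∑ f : s, g (Pi.single f 1) • (f : StrongDual ℝ X) := by
      ext x
      have := LinearMap.pi_apply_eq_sum_univ g.toLinearMap (T x)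
      simp only [ContinuousLinearMap.coe_coe] at this
      simp only [ContinuousLinearMap.comp_apply, this, sum_apply,
        smul_apply, smul_eq_mul]
      refine Finset.sum_congr rfl fun f _ => ?_
      rw [mul_comm]
      congr 2
      ext i
      simp [Pi.single_apply, eq_comm]
    have hφg : φ (g.comp T) = g y := by
      have := LinearMap.pi_apply_eq_sum_univ g.toLinearMap y
      simp only [ContinuousLinearMap.coe_coe] at this
      rw [hsum, this, map_sum]
      refine Finset.sum_congr rfl fun f _ => ?_
      rw [map_smul, smul_eq_mul, smul_eq_mul, mul_comm]
      congr 2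
      ext i
      simp [Pi.single_apply, eq_comm]
    have := φ.le_of_opNorm_le hφ (g.comp T)
    rw [hφg, Real.norm_eq_abs, one_mul] at this
    linarith [le_abs_self (g y)]
  obtain ⟨_, ⟨x, hx, rfl⟩, hxy⟩ := Metric.mem_closure_iff.1 hy ε hε
  refine ⟨x, by simpa using hx, fun f hf => ?_⟩
  have := (dist_pi_lt_iff hε).1 hxy ⟨f, hf⟩
  rwa [dist_comm, Real.dist_eq] at this

theorem Submodule.exists_strongDual_of_notMem (p : Submodule ℝ X) (hp : IsClosed (p : Set X))
    {x : X} (hx : x ∉ p) :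
    ∃ f : StrongDual ℝ X, ‖f‖ ≤ 1 ∧ (∀ y ∈ p, f y = 0) ∧ 0 < f x := by
  obtain ⟨f, u, hf, hu⟩ := geometric_hahn_banach_closed_point p.convex hp hx
  have hu0 : 0 < u := by simpa using hf 0 p.zero_mem
  have hfp (y) (hy : y ∈ p) : f y = 0 := by
    by_contra hne
    have := hf _ (p.smul_mem (f x / f y) hy)
    rw [map_smul, smul_eq_mul, div_mul_cancel₀ _ hne] at this
    linarith
  have hf0 : f ≠ 0 := by
    rintro rfl
    simp at hu
    linarith
  refine ⟨‖f‖⁻¹ • f, (norm_smul_inv_norm (𝕜 := ℝ) hf0).le, fun y hy => by simp [hfp y hy], ?_⟩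
  exact mul_pos (inv_pos.2 (norm_pos_iff.2 hf0)) (hu0.trans hu)

set_option maxSynthPendingDepth 4 in
/-- On a non-reflexive Banach space the unit balls of the space and of its dual contain sequences
whose pairing is triangular up to a small error. -/
theorem exists_seq_of_not_surjective_inclusionInDoubleDual [CompleteSpace X]
    (h : ¬ Function.Surjective (NormedSpace.inclusionInDoubleDual ℝ X)) :
    ∃ δ > 0, ∃ (f : ℕ → StrongDual ℝ X) (x : ℕ → X), (∀ n, ‖f n‖ ≤ 1) ∧ (∀ n, ‖x n‖ ≤ 1) ∧
      (∀ m n, m < n → f n (x m) < δ) ∧ ∀ m n, m < n → 2 * δ < f m (x n) := by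
  classical
  simp only [Function.Surjective, not_forall] at h
  obtain ⟨φ₀, hφ₀⟩ := h
  let J := NormedSpace.inclusionInDoubleDual ℝ X
  have hJ : IsClosed (LinearMap.range J.toLinearMap : Set (StrongDual ℝ (StrongDual ℝ X))) := by
    have hi : Isometry J := (NormedSpace.inclusionInDoubleDualLi (E := X) ℝ).isometry
    exact hi.isClosedEmbedding.isClosed_range
  obtain ⟨Ψ, hΨ1, hΨJ, hΨφ₀⟩ := Submodule.exists_strongDual_of_notMem _ hJ (x := φ₀)
    (by simpa using hφ₀)
  have hφ0 : φ₀ ≠ 0 := by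
    rintro rfl
    simp at hΨφ₀
  let φ := ‖φ₀‖⁻¹ • φ₀
  have hφ1 : ‖φ‖ ≤ 1 := (norm_smul_inv_norm (𝕜 := ℝ) hφ0).le
  obtain ⟨δ, hδ, hΨφ⟩ : ∃ δ > 0, Ψ φ = 4 * δ := by
    refine ⟨Ψ φ / 4, ?_, by ring⟩
    have : Ψ φ = ‖φ₀‖⁻¹ * Ψ φ₀ := by simp [φ]
    rw [this]
    have := norm_pos_iff.2 hφ0
    positivity
  obtain ⟨p, hp, hr⟩ := exists_seq_of_forall_finset_exists
    (fun p : StrongDual ℝ X × X => ‖p.1‖ ≤ 1 ∧ ‖p.2‖ ≤ 1 ∧ 3 * δ < φ p.1)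
    (fun p q => q.1 p.2 < δ ∧ 2 * δ < p.1 q.2) (by
      intro s hs
      obtain ⟨f, hf, hfs⟩ := exists_norm_le_one_forall_abs_sub_lt Ψ hΨ1
        (insert φ (s.image fun p => J p.2)) hδ
      obtain ⟨x, hx, hxs⟩ := exists_norm_le_one_forall_abs_sub_lt φ hφ1 (s.image Prod.fst) hδ
      refine ⟨(f, x), ⟨hf, hx, ?_⟩, fun q hq => ⟨?_, ?_⟩⟩
      · have := hfs φ (Finset.mem_insert_self _ _)
        rw [abs_lt, hΨφ] at this
        linarith
      · have := hfs (J q.2) (Finset.mem_insert_of_mem (Finset.mem_image_of_mem _ hq))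
        have h0 : Ψ (J q.2) = 0 := hΨJ _ ⟨q.2, rfl⟩
        rw [abs_lt, h0] at this
        have h1 : J q.2 f = f q.2 := rfl
        linarith
      · have := hxs q.1 (Finset.mem_image_of_mem _ hq)
        rw [abs_lt] at this
        linarith [(hs q hq).2.2])
  exact ⟨δ, hδ, fun n => (p n).1, fun n => (p n).2, fun n => (hp n).1, fun n => (hp n).2.1,
    fun m n hmn => (hr m n hmn).1, fun m n hmn => (hr m n hmn).2⟩

/-- The functional `w` lies pointwise above the lower limit along `V` (and hence, applied to `-x`,
below the upper limit). -/
def BetweenLimits (V : Filter (StrongDual ℝ X)) (w : StrongDual ℝ X) : Prop :=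
  ∀ x c, (∀ᶠ h in V, c ≤ h x) → c ≤ w x

theorem BetweenLimits.le_of_eventually {V : Filter (StrongDual ℝ X)} {w : StrongDual ℝ X}
    (hw : BetweenLimits V w) {x : X} {c : ℝ} (h : ∀ᶠ h in V, h x ≤ c) : w x ≤ c := by
  have := hw (-x) (-c) (h.mono fun h hh => by simpa using hh)
  simpa using this

theorem exists_betweenLimits (V : Filter (StrongDual ℝ X)) [V.NeBot]
    (hV : closedBall 0 1 ∈ V) : ∃ w, ‖w‖ ≤ 1 ∧ BetweenLimits V w := by
  let U := Ultrafilter.of V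
  have hU : closedBall 0 1 ∈ U := Ultrafilter.of_le V hV
  obtain ⟨w, hw, hUw⟩ := (WeakDual.isCompact_closedBall (𝕜 := ℝ) (E := X) 0 1).ultrafilter_le_nhds
    (U.map StrongDual.toWeakDual) (by
      rw [Ultrafilter.coe_map, le_principal_iff, mem_map]
      exact hU)
  refine ⟨WeakDual.toStrongDual w, by simpa using hw, fun x c hc => ?_⟩
  have ht : Tendsto (fun h : StrongDual ℝ X => h x) U (𝓝 (w x)) :=
    ((WeakDual.eval_continuous x).tendsto w).comp hUw
  exact ge_of_tendsto ht (Ultrafilter.of_le V hc)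

/-- A countable family of properties of filters, each stable under refinement, can be decided
simultaneously for all countably generated refinements of some filter. -/
theorem exists_stable_filter {α : Type*} (P : ℕ → Filter α → Prop)
    (hP : ∀ i V V', V' ≤ V → P i V → P i V') (V₀ : Filter α) [V₀.NeBot]
    [V₀.IsCountablyGenerated] :
    ∃ V ≤ V₀, V.NeBot ∧ V.IsCountablyGenerated ∧
      ∀ i, ∀ V' ≤ V, V'.NeBot → V'.IsCountablyGenerated → P i V' → P i V := by
  let G := {V : Filter α // V.NeBot ∧ V.IsCountablyGenerated}
  have step (i : ℕ) (V : G) : ∃ V' : G, V'.1 ≤ V.1 ∧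
      ∀ W : G, W.1 ≤ V'.1 → P i W.1 → P i V'.1 := by
    by_cases h : ∃ V' : G, V'.1 ≤ V.1 ∧ P i V'.1
    · obtain ⟨V', h₁, h₂⟩ := h
      exact ⟨V', h₁, fun _ _ _ => h₂⟩
    · exact ⟨V, le_rfl, fun W hW hPW => (h ⟨W, hW, hPW⟩).elim⟩
  choose next hle hdec using step
  let v : ℕ → G := fun n => Nat.rec ⟨V₀, ‹_›, ‹_›⟩ (fun i V => next i V) n
  have hanti : Antitone fun n => (v n).1 := antitone_nat_of_succ_le fun n => hle n (v n)
  have hne (n : ℕ) : (v n).1.NeBot := (v n).2.1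
  have hcg (n : ℕ) : (v n).1.IsCountablyGenerated := (v n).2.2
  refine ⟨⨅ n, (v n).1, iInf_le _ 0, ?_, inferInstance, fun i V' hV' hne' hcg' hi => ?_⟩
  · have : Nonempty α := nonempty_of_neBot V₀
    exact iInf_neBot_of_directed hanti.directed_ge hne
  · exact hP i _ _ (iInf_le _ (i + 1))
      (hdec i (v i) ⟨V', hne', hcg'⟩ (hV'.trans (iInf_le _ (i + 1))) hi)

/-- **Pryce's lemma**: after refining the filter, the distance from elements of a separable set to
functionals between the lower and upper limits does not depend on the functional. -/
theorem exists_filter_norm_sub_eq (V₀ : Filter (StrongDual ℝ X)) [V₀.NeBot]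
    [V₀.IsCountablyGenerated] {S : Set (StrongDual ℝ X)} (hS : TopologicalSpace.IsSeparable S) :
    ∃ V ≤ V₀, V.NeBot ∧ V.IsCountablyGenerated ∧ ∀ g ∈ S, ∀ w w', BetweenLimits V w →
      BetweenLimits V w' → ‖g - w‖ = ‖g - w'‖ := by
  obtain ⟨D, hD, hSD⟩ := hS
  have hcount : ((insert 0 D) ×ˢ (univ : Set ℚ)).Countable := (hD.insert 0).prod countable_univ
  obtain ⟨d, hd⟩ := hcount.exists_eq_range ⟨(0, 0), by simp⟩
  obtain ⟨V, hV, hne, hcg, hst⟩ := exists_stable_filter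
    (fun i V => ∃ x : X, ‖x‖ ≤ 1 ∧ ∀ᶠ h in V, ((d i).2 : ℝ) ≤ (d i).1 x - h x)
    (fun i V V' hVV' ⟨x, hx, h⟩ => ⟨x, hx, h.filter_mono hVV'⟩) V₀
  refine ⟨V, hV, hne, hcg, ?_⟩
  have key (g) (hg : g ∈ D) (w w') (hw : BetweenLimits V w) (hw' : BetweenLimits V w') :
      ‖g - w‖ ≤ ‖g - w'‖ := by
    by_contra! hlt
    obtain ⟨c, hc₁, hc₂⟩ := exists_rat_btwn hlt
    have hc0 : (0 : ℝ) ≤ c := (norm_nonneg _).trans hc₁.le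
    obtain ⟨x, hx, hxc⟩ : ∃ x : X, ‖x‖ ≤ 1 ∧ (c : ℝ) < (g - w) x := by
      by_contra! hno
      refine hc₂.not_ge (ContinuousLinearMap.opNorm_le_of_unit_norm hc0 fun x hx => ?_)
      have h₁ := hno x hx.le
      have h₂ := hno (-x) (by simp [hx])
      rw [map_neg] at h₂
      rw [Real.norm_eq_abs, abs_le]
      exact ⟨by linarith, h₁⟩
    have hfreq : ∃ᶠ h in V, h x ≤ g x - c := by
      intro hev
      have := hw x (g x - c) (hev.mono fun h hh => (not_le.1 hh).le)
      simp only [sub_apply] at hxc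
      linarith
    obtain ⟨i, hi⟩ : (g, c) ∈ range d := by
      rw [← hd]
      exact ⟨mem_insert_of_mem _ hg, mem_univ _⟩
    obtain ⟨x', hx', hev⟩ := hst i (V ⊓ 𝓟 {h | h x ≤ g x - c}) inf_le_left
      (frequently_mem_iff_neBot.1 hfreq) inferInstance
      ⟨x, hx, by
        rw [hi]
        filter_upwards [mem_inf_of_right (mem_principal_self _)] with h hh
        have : h x ≤ g x - c := hh
        linarith⟩
    rw [hi] at hev
    have h₁ : w' x' ≤ g x' - c := hw'.le_of_eventually (hev.mono fun h hh => by linarith)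
    have h₂ := (g - w').le_opNorm_of_le hx'
    rw [Real.norm_eq_abs, mul_one] at h₂
    have h₃ := le_abs_self ((g - w') x')
    simp only [sub_apply] at h₂ h₃
    linarith
  intro g hg w w' hw hw'
  have hcl : IsClosed {g | ‖g - w‖ = ‖g - w'‖} := isClosed_eq (by fun_prop) (by fun_prop)
  exact closure_minimal (fun g hg => (key g hg w w' hw hw').antisymm (key g hg w' w hw' hw))
    hcl (hSD hg)

/-- The convexity step in James' construction. -/
theorem exists_forall_norm_add_smul_add_smul {E : Type*} [NormedAddCommGroup E] [NormedSpace ℝ E]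
    {A : Set E} (hA : Convex ℝ A) (hne : A.Nonempty) {u : E} {b b' α M : ℝ} (hb : 0 < b)
    (hb' : 0 < b') (hM : b * α + ‖u‖ < M) (h : ∀ a ∈ A, M ≤ ‖u + b • a‖) :
    ∃ a₀ ∈ A, ∃ M' > b' * α + ‖u + b • a₀‖, ∀ a ∈ A, M' ≤ ‖u + b • a₀ + b' • a‖ := by
  let m := sInf ((fun a => ‖u + b • a‖) '' A)
  have hbdd : BddBelow ((fun a => ‖u + b • a‖) '' A) := ⟨M, by rintro _ ⟨a, ha, rfl⟩; exact h a ha⟩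
  have hMm : M ≤ m := le_csInf (hne.image _) (by rintro _ ⟨a, ha, rfl⟩; exact h a ha)
  have hm (a) (ha : a ∈ A) : m ≤ ‖u + b • a‖ := csInf_le hbdd ⟨a, ha, rfl⟩
  have hη : 0 < b' / b * (m - ‖u‖ - b * α) := mul_pos (by positivity) (by linarith)
  obtain ⟨_, ⟨a₀, ha₀, rfl⟩, hlt⟩ := exists_lt_of_csInf_lt (hne.image _) (lt_add_of_pos_right m hη)
  refine ⟨a₀, ha₀, m + b' / b * (m - ‖u‖), ?_, fun a ha => ?_⟩
  · have : b' / b * (m - ‖u‖ - b * α) = b' / b * (m - ‖u‖) - b' * α := by field_simp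
    simp only at hlt
    linarith
  · have hz : (b / (b + b')) • a₀ + (b' / (b + b')) • a ∈ A :=
      hA ha₀ ha (by positivity) (by positivity) (by field_simp)
    have h₁ := hm _ hz
    have h₂ : u + b • ((b / (b + b')) • a₀ + (b' / (b + b')) • a) =
        (b' / (b + b')) • u + (b / (b + b')) • (u + b • a₀ + b' • a) := by
      have h₃ : u = (b' / (b + b') + b / (b + b')) • u := by
        rw [← add_div, add_comm b', div_self (by positivity), one_smul]
      nth_rw 1 [h₃]
      module
    rw [h₂] at h₁
    have h₄ := h₁.trans (norm_add_le _ _)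
    rw [norm_smul, norm_smul, Real.norm_of_nonneg (by positivity),
      Real.norm_of_nonneg (by positivity)] at h₄
    have h₅ : m * (b + b') ≤ b' * ‖u‖ + b * ‖u + b • a₀ + b' • a‖ := by
      have := mul_le_mul_of_nonneg_right h₄ (by positivity : 0 ≤ b + b')
      refine this.trans_eq ?_
      field_simp
    have h₆ : m + b' / b * (m - ‖u‖) = (m * (b + b') - b' * ‖u‖) / b := by field_simp; ring
    rw [h₆, div_le_iff₀ hb]
    linarith

/-- James' inductive construction of a sequence whose weighted partial sums grow steadily. -/
theorem exists_seq_norm_sum_growth {E : Type*} [NormedAddCommGroup E] [NormedSpace ℝ E]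
    {A : ℕ → Set E} (hA : ∀ n, Convex ℝ (A n)) (hne : ∀ n, (A n).Nonempty) (hanti : Antitone A)
    {b : ℕ → ℝ} (hb : ∀ n, 0 < b n) {α α' : ℝ} (hα : α < α') (h : ∀ a ∈ A 0, α' ≤ ‖a‖) :
    ∃ a : ℕ → E, (∀ n, a n ∈ A n) ∧ ∀ n, b n * α + ‖∑ j ∈ Finset.range n, b j • a j‖ ≤
      ‖∑ j ∈ Finset.range (n + 1), b j • a j‖ := by
  let H : ℕ → E → Prop := fun n u => ∃ M > b n * α + ‖u‖, ∀ a ∈ A n, M ≤ ‖u + b n • a‖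
  have step (n : ℕ) (u : {u // H n u}) : ∃ a ∈ A n, H (n + 1) (u.1 + b n • a) := by
    obtain ⟨u, M, hM, hu⟩ := u
    obtain ⟨a, ha, M', hM', h'⟩ := exists_forall_norm_add_smul_add_smul (hA n) (hne n) (hb n)
      (hb (n + 1)) hM hu
    exact ⟨a, ha, M', hM', fun y hy => h' y (hanti n.le_succ hy)⟩
  choose next hmem hnext using step
  have h0 : H 0 0 := by
    refine ⟨b 0 * α', by simpa using mul_lt_mul_of_pos_left hα (hb 0), fun a ha => ?_⟩
    rw [zero_add, norm_smul, Real.norm_of_nonneg (hb 0).le]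
    exact mul_le_mul_of_nonneg_left (h a ha) (hb 0).le
  let v : ∀ n, {u // H n u} := fun n => Nat.rec ⟨0, h0⟩ (fun n u => ⟨_, hnext n u⟩) n
  have hv (n : ℕ) : (v n).1 = ∑ j ∈ Finset.range n, b j • next j (v j) := by
    induction n with
    | zero => simp [v]
    | succ n ih => rw [Finset.sum_range_succ, ← ih]
  refine ⟨fun n => next n (v n), fun n => hmem n _, fun n => ?_⟩
  rw [Finset.sum_range_succ, ← hv]
  obtain ⟨M, hM, hu⟩ := (v n).2
  exact hM.le.trans (hu _ (hmem n _))

theorem norm_tsum_smul_geometric_le {E : Type*} [NormedAddCommGroup E] [NormedSpace ℝ E]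
    {r C : ℝ} (hr0 : 0 ≤ r) (hr1 : r < 1) {a : ℕ → E} (ha : ∀ n, ‖a n‖ ≤ C) (n : ℕ) :
    ‖∑' j, r ^ (j + n) • a (j + n)‖ ≤ C * (r ^ n / (1 - r)) := by
  have hs : HasSum (fun j => C * (r ^ n * r ^ j)) (C * (r ^ n * (1 - r)⁻¹)) :=
    ((hasSum_geometric_of_lt_one hr0 hr1).mul_left _).mul_left _
  rw [div_eq_mul_inv]
  refine tsum_of_norm_bounded hs fun j => ?_
  rw [norm_smul, Real.norm_of_nonneg (pow_nonneg hr0 _), pow_add, mul_comm C, mul_comm (r ^ j)]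
  exact mul_le_mul_of_nonneg_left (ha _) (by positivity)

theorem exists_not_attaining_of_filter [CompleteSpace X] (V : Filter (StrongDual ℝ X)) [V.NeBot]
    [V.IsCountablyGenerated] {S : Set (StrongDual ℝ X)} (hSV : S ∈ V)
    (hS : S ⊆ closedBall 0 1)
    (hV : ∀ g ∈ Submodule.span ℝ S, ∀ w w', BetweenLimits V w → BetweenLimits V w' →
      ‖g - w‖ = ‖g - w'‖)
    {δ : ℝ} (hδ : 0 < δ) (hdist : ∀ w, BetweenLimits V w → ∀ g ∈ convexHull ℝ S, δ ≤ ‖g - w‖) :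
    ∃ F : StrongDual ℝ X, ∀ x, ‖x‖ = 1 → F x ≠ ‖F‖ := by
  obtain ⟨w, hw1, hw⟩ := exists_betweenLimits V (mem_of_superset hSV hS)
  obtain ⟨U, hU⟩ := V.exists_antitone_basis
  let K : ℕ → Set (StrongDual ℝ X) := fun n => convexHull ℝ (U n ∩ S)
  have hKanti : Antitone K := fun m n hmn =>
    convexHull_mono (inter_subset_inter_left _ (hU.antitone hmn))
  have hKne (n : ℕ) : (K n).Nonempty :=
    (Filter.nonempty_of_mem (inter_mem (hU.mem n) hSV)).mono (subset_convexHull ℝ _)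
  have hKS (n : ℕ) : K n ⊆ convexHull ℝ S := convexHull_mono inter_subset_right
  -- the weights are powers of a ratio small enough for the tails to be negligible
  let α := δ / 2
  have hα : 0 < α := by positivity
  let r := α / (8 + α)
  have hr0 : 0 < r := by positivity
  have hr1 : r < 1 := (div_lt_one (by positivity)).2 (by linarith)
  have hr : r / (1 - r) = α / 8 := by
    have : 1 - r = 8 / (8 + α) := by simp only [r]; field_simp; ring
    rw [this]
    simp only [r]
    field_simp
  obtain ⟨a, haK, hgrow⟩ := exists_seq_norm_sum_growth (A := fun n => (· + w) ⁻¹' K n)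
    (fun n => (convex_convexHull ℝ _).translate_preimage_left w)
    (fun n => (hKne n).elim fun g hg => ⟨g - w, by simpa using hg⟩)
    (fun m n hmn => preimage_mono (hKanti hmn))
    (b := fun n => r ^ n) (fun n => pow_pos hr0 n) (α := α) (α' := δ) (half_lt_self hδ)
    (fun a ha => by simpa using hdist w hw (a + w) (hKS 0 ha))
  let g : ℕ → StrongDual ℝ X := fun n => a n + w
  have hgK (n : ℕ) : g n ∈ K n := haK n
  have hg1 (n : ℕ) : ‖g n‖ ≤ 1 := by
    simpa using convexHull_min hS (convex_closedBall _ _) (hKS n (hgK n))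
  obtain ⟨w', hw'1, hw'⟩ := exists_betweenLimits (map g atTop)
    (mem_map.2 (univ_mem' fun n => by simpa using hg1 n))
  have hVw' : BetweenLimits V w' := by
    intro x c hc
    obtain ⟨n, -, hn⟩ := hU.toHasBasis.mem_iff.1 hc
    refine hw' x c (eventually_map.2 ((eventually_ge_atTop n).mono fun m hm => ?_))
    have hconv : Convex ℝ {h : StrongDual ℝ X | c ≤ h x} :=
      convex_halfSpace_ge (IsLinearMap.mk (by simp) (by simp)) c
    exact convexHull_min (inter_subset_left.trans hn) hconv (hKanti hm (hgK m))
  have hbnd (n : ℕ) : ‖g n - w'‖ ≤ 2 := by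
    linarith [norm_sub_le (g n) w', hg1 n]
  let v : ℕ → StrongDual ℝ X := fun n => ∑ j ∈ Finset.range n, r ^ j • (g j - w')
  have hvnorm (n : ℕ) : ‖v n‖ = ‖∑ j ∈ Finset.range n, r ^ j • a j‖ := by
    have ha (j) : a j = g j - w := by simp [g]
    simp only [ha, v, smul_sub, Finset.sum_sub_distrib, ← Finset.sum_smul]
    rcases n with _ | n
    · simp
    set B := ∑ j ∈ Finset.range (n + 1), r ^ j
    have hB : 0 < B := Finset.sum_pos (fun j _ => pow_pos hr0 j) (by simp)
    set G := ∑ j ∈ Finset.range (n + 1), r ^ j • g j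
    have hG : G ∈ Submodule.span ℝ S := Submodule.sum_mem _ fun j _ =>
      Submodule.smul_mem _ _ (convexHull_min Submodule.subset_span
        (Submodule.convex _) (hKS j (hgK j)))
    have hscale (z : StrongDual ℝ X) : ‖G - B • z‖ = B * ‖B⁻¹ • G - z‖ := by
      have : G - B • z = B • (B⁻¹ • G - z) := by
        ext x
        simp
        field_simp
      rw [this, norm_smul, Real.norm_of_nonneg hB.le]
    rw [hscale, hscale, hV _ (Submodule.smul_mem _ _ hG) w' w hVw' hw]
  have hvgrow (n : ℕ) : r ^ n * α + ‖v n‖ ≤ ‖v (n + 1)‖ := by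
    rw [hvnorm, hvnorm]
    exact hgrow n
  have hsum : Summable fun j => r ^ j • (g j - w') := by
    refine Summable.of_norm_bounded ((summable_geometric_of_lt_one hr0.le hr1).mul_left 2)
      fun j => ?_
    rw [norm_smul, Real.norm_of_nonneg (pow_nonneg hr0.le j), mul_comm]
    exact mul_le_mul_of_nonneg_right (hbnd j) (pow_nonneg hr0.le j)
  refine ⟨∑' j, r ^ j • (g j - w'), fun x hx hFx => ?_⟩
  set F := ∑' j, r ^ j • (g j - w') with hF
  have hvF (n : ℕ) : ‖v n‖ ≤ ‖F‖ := by
    have hmono : Monotone fun n => ‖v n‖ := monotone_nat_of_le_succ fun n =>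
      (le_add_of_nonneg_left (by positivity)).trans (hvgrow n)
    exact hmono.ge_of_tendsto (hsum.hasSum.tendsto_sum_nat.norm) n
  obtain ⟨n, hn⟩ : ∃ n, g n x < w' x + α / 2 := by
    by_contra! hno
    have := hw' x _ (eventually_map.2 (Eventually.of_forall hno))
    linarith
  have hdecomp : F = v n + r ^ n • (g n - w') +
      ∑' j, r ^ (j + (n + 1)) • (g (j + (n + 1)) - w') := by
    rw [hF, ← hsum.sum_add_tsum_nat_add (n + 1), Finset.sum_range_succ]
  have htail := norm_tsum_smul_geometric_le hr0.le hr1 hbnd (n + 1)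
  rw [pow_succ, mul_div_assoc, hr] at htail
  set R := ∑' j, r ^ (j + (n + 1)) • (g (j + (n + 1)) - w')
  have hx₁ : v n x ≤ ‖v n‖ := (le_abs_self _).trans ((v n).unit_le_opNorm x hx.le)
  have hx₂ : R x ≤ ‖R‖ := (le_abs_self _).trans (R.unit_le_opNorm x hx.le)
  have hFx' : F x = v n x + r ^ n * (g n x - w' x) + R x := by
    rw [hdecomp]
    simp
  have hpos := pow_pos hr0 n
  have h₁ : r ^ n * (g n x - w' x) < r ^ n * (α / 2) := mul_lt_mul_of_pos_left (by linarith) hpos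
  have h₂ := (hvgrow n).trans (hvF (n + 1))
  have h₃ : 0 < r ^ n * α := by positivity
  linarith

/-- A non-reflexive Banach space carries a functional that does not attain its norm. -/
theorem exists_not_attaining_of_not_surjective_inclusionInDoubleDual [CompleteSpace X]
    (h : ¬ Function.Surjective (NormedSpace.inclusionInDoubleDual ℝ X)) :
    ∃ F : StrongDual ℝ X, ∀ x, ‖x‖ = 1 → F x ≠ ‖F‖ := by
  obtain ⟨δ, hδ, f, x, hf, hx, hsmall, hlarge⟩ :=
    exists_seq_of_not_surjective_inclusionInDoubleDual h
  obtain ⟨V, hle, hne, hcg, hV⟩ := exists_filter_norm_sub_eq (map f atTop)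
    (S := Submodule.span ℝ (range f)) (countable_range f).isSeparable.span
  refine exists_not_attaining_of_filter V (hle (range_mem_map)) (S := range f) ?_ hV hδ
    fun w hw g hg => ?_
  · rintro _ ⟨n, rfl⟩
    simpa using hf n
  have hconv : Convex ℝ {g : StrongDual ℝ X | ∀ᶠ m in atTop, 2 * δ ≤ g (x m)} := by
    intro g₁ h₁ g₂ h₂ s t hs ht hst
    filter_upwards [h₁, h₂] with m hm₁ hm₂
    have h₃ := mul_le_mul_of_nonneg_left hm₁ hs
    have h₄ := mul_le_mul_of_nonneg_left hm₂ ht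
    have h₅ : s * (2 * δ) + t * (2 * δ) = 2 * δ := by rw [← add_mul, hst, one_mul]
    simp only [add_apply, smul_apply, smul_eq_mul]
    linarith
  have hg' : ∀ᶠ m in atTop, 2 * δ ≤ g (x m) := by
    refine convexHull_min ?_ hconv hg
    rintro _ ⟨i, rfl⟩
    exact (eventually_gt_atTop i).mono fun m hm => (hlarge i m hm).le
  obtain ⟨m, hm⟩ := hg'.exists
  have hwm : w (x m) ≤ δ := hw.le_of_eventually (hle (eventually_map.2
    ((eventually_gt_atTop m).mono fun n hn => (hsmall m n hn).le)))
  have h₁ := (g - w).unit_le_opNorm (x m) (hx m)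
  have h₂ := (le_abs_self ((g - w) (x m))).trans h₁
  simp only [sub_apply] at h₂
  linarith

end James

/-- James' theorem: if every functional on `X` attains its norm then `X` is reflexive;
consequently, on a non-reflexive Grothendieck space some functional does not attain
its norm. -/
theorem james_and_nonreflexive_grothendieck (X : Type*)
    [NormedAddCommGroup X] [NormedSpace ℝ X] [CompleteSpace X] :
    ((∀ f : X →L[ℝ] ℝ, ∃ x : X, ‖x‖ = 1 ∧ f x = ‖f‖) →
      Function.Surjective (NormedSpace.inclusionInDoubleDual ℝ X)) ∧
    (IsGrothendieck X →
      ¬ Function.Surjective (NormedSpace.inclusionInDoubleDual ℝ X) →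
      ∃ f : X →L[ℝ] ℝ, ∀ x : X, ‖x‖ = 1 → f x ≠ ‖f‖) := by
  refine ⟨fun h => ?_, fun _ h => exists_not_attaining_of_not_surjective_inclusionInDoubleDual h⟩
  by_contra hns
  obtain ⟨F, hF⟩ := exists_not_attaining_of_not_surjective_inclusionInDoubleDual hns
  obtain ⟨x, hx, hFx⟩ := h F
  exact hF x hx hFx
end
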